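/- arXiv:1005.2553 — 5 statements merged into one kernel-verified Lean document; each statement's English description precedes it below -/
import Mathlib

section
/- Let n, m ≥ 1 and let r = (r_1, …, r_n) ∈ ℕ^n satisfy r_1 + 2r_2 + ⋯ + n·r_n = n, |r| := r_1 + ⋯ + r_n < n, and m ≤ |r| and m < n. Then the number N of Dyck paths of length 2n with exactly m − 1 returns and with ascent type r satisfies N · (n − |r| − 1)! · (|r| − m)! · r_1! r_2! ⋯ r_n! = m · (n − m − 1)! · (|r| − 1)!. -/
/-- A Dyck path of length `2n`: a list of `2n` steps (`true` = U, `false` = D) with `n` U's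
and `n` D's such that every prefix has at least as many U's as D's. -/
def IsDyckPath (n : ℕ) (l : List Bool) : Prop :=
  l.length = 2 * n ∧ l.count true = n ∧ l.count false = n ∧
    ∀ k, (l.take k).count false ≤ (l.take k).count true

/-- The path `l` has ascent type `r = (r_1, …, r_n)`: for each `i`, the number of maximal
consecutive runs of U-steps of length `i` is `r_i`. -/
def HasAscentType (n : ℕ) (l : List Bool) (r : Fin n → ℕ) : Prop :=
  ∀ i : Fin n, ((l.splitOn false).map List.length).count (i.1 + 1) = r i

/-- The number of returns of the path `l` of length `2n`: lattice points strictly between the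
endpoints where the numbers of U's and D's so far agree. -/
def returnCount (n : ℕ) (l : List Bool) : ℕ :=
  ((Finset.Ioo 0 (2 * n)).filter
    (fun k => (l.take k).count true = (l.take k).count false)).card

/-!
A Dyck path is determined by the sequence `a_1, …, a_n` in which `a_i` is the number of U-steps
immediately before the `i`-th D-step. The ascent type fixes the multiset of entries: the ascent
lengths, together with `z = n - |r|` zeros. So the theorem counts arrangements of a multiset, and
once equal entries carry distinct labels, removing the first entry gives a recursion without
multiplicity factors.

For this recursion, count more generally the paths that start at height `h`, end at height `0`,
never go below `0` and leave height `0` exactly `m` times (a Dyck path with `m - 1` returns leaves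
height `0` exactly `m` times). With `q + 1` labelled ascents and `z` labelled zeros their number is
`q! z! (h ((j, z)) + m ((z, j)))`, where `((a, b))` counts multisets of size `b` from `a` types and
`j = q + 1 - m`: it depends on the ascents only through their number and sum. The recursion
preserves this formula by Pascal's rule and by `z ((j, z)) = j ((z, j))`, and `h = 0` is the
theorem.
-/

section LabelledCard

open scoped Nat

variable {α : Type*}

theorem finite_lists_coe_eq (s : Multiset α) (P : List α → Prop) :
    Finite {l : List α // (l : Multiset α) = s ∧ P l} := by
  classical
  refine (Multiset.finite_toSet s.lists).subset ?_
  rintro l ⟨rfl, -⟩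
  exact (Multiset.mem_lists_iff _ _).2 rfl

variable [DecidableEq α]

/-- The number of lists satisfying `P` with underlying multiset `s`, when equal elements of `s` are
given distinct labels: every list has `∏ a, (s.count a)!` labellings. Removing the first entry
then gives a recursion over the elements of `s` counted with multiplicity. -/
noncomputable def labelledCard (s : Multiset α) (P : List α → Prop) : ℕ :=
  Nat.card {l : List α // (l : Multiset α) = s ∧ P l} * ∏ a ∈ s.toFinset, (s.count a)!

theorem prod_factorial_count_eq_count_mul_erase {s : Multiset α} {a : α} (ha : a ∈ s) :
    ∏ b ∈ s.toFinset, (s.count b)! =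
      s.count a * ∏ b ∈ (s.erase a).toFinset, ((s.erase a).count b)! := by
  have extend_range : ∏ b ∈ (s.erase a).toFinset, ((s.erase a).count b)! =
      ∏ b ∈ s.toFinset, ((s.erase a).count b)! :=
    Finset.prod_subset (Multiset.toFinset_subset.2 (Multiset.erase_subset a s)) fun b _ hb ↦ by
      rw [Multiset.count_eq_zero.2 (mt Multiset.mem_toFinset.2 hb), Nat.factorial_zero]
  have ha' : a ∈ s.toFinset := Multiset.mem_toFinset.2 ha
  rw [extend_range, ← Finset.mul_prod_erase _ _ ha', ← Finset.mul_prod_erase _ _ ha', ← mul_assoc,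
    Multiset.count_erase_self, Nat.mul_factorial_pred (Multiset.count_pos.2 ha).ne']
  congr 1
  exact Finset.prod_congr rfl fun b hb ↦ by
    rw [Multiset.count_erase_of_ne (Finset.ne_of_mem_erase hb)]

theorem natCard_lists_eq_sum_cons {s : Multiset α} (hs : s ≠ 0) (P : List α → Prop) :
    Nat.card {l : List α // (l : Multiset α) = s ∧ P l} =
      ∑ a ∈ s.toFinset, Nat.card {l : List α // (l : Multiset α) = s.erase a ∧ P (a :: l)} := by
  let cons : (Σ a : s.toFinset, {l : List α // (l : Multiset α) = s.erase a ∧ P (a :: l)}) →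
      {l : List α // (l : Multiset α) = s ∧ P l} := fun x ↦
    ⟨x.1 :: x.2, by
      rw [← Multiset.cons_coe, x.2.2.1, Multiset.cons_erase (Multiset.mem_toFinset.1 x.1.2)],
      x.2.2.2⟩
  have cons_bijective : Function.Bijective cons := by
    constructor
    · rintro ⟨⟨a, _⟩, l, _⟩ ⟨⟨b, _⟩, l', _⟩ h
      obtain ⟨rfl, rfl⟩ := List.cons.inj (Subtype.ext_iff.1 h)
      rfl
    · rintro ⟨_ | ⟨a, l⟩, rfl, hP⟩
      · exact absurd rfl hs
      · exact ⟨⟨⟨a, by simp⟩, l, by simp, hP⟩, rfl⟩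
  have (a : s.toFinset) := finite_lists_coe_eq (s.erase a) fun l ↦ P (a :: l)
  rw [← Nat.card_eq_of_bijective cons cons_bijective, Nat.card_sigma,
    Finset.sum_coe_sort s.toFinset fun a ↦
      Nat.card {l : List α // (l : Multiset α) = s.erase a ∧ P (a :: l)}]

theorem labelledCard_eq_sum_cons {s : Multiset α} (hs : s ≠ 0) (P : List α → Prop) :
    labelledCard s P = (s.map fun a ↦ labelledCard (s.erase a) fun l ↦ P (a :: l)).sum := by
  rw [Finset.sum_multiset_map_count, labelledCard, natCard_lists_eq_sum_cons hs, Finset.sum_mul]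
  refine Finset.sum_congr rfl fun a ha ↦ ?_
  rw [prod_factorial_count_eq_count_mul_erase (Multiset.mem_toFinset.1 ha), labelledCard,
    smul_eq_mul, mul_left_comm]

theorem labelledCard_eq_zero {s : Multiset α} {P : List α → Prop}
    (h : ∀ l : List α, (l : Multiset α) = s → ¬P l) : labelledCard s P = 0 := by
  have : IsEmpty {l : List α // (l : Multiset α) = s ∧ P l} := ⟨fun ⟨l, hl, hP⟩ ↦ h l hl hP⟩
  rw [labelledCard, Nat.card_of_isEmpty, zero_mul]

theorem labelledCard_zero {P : List α → Prop} (h : P []) : labelledCard 0 P = 1 := by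
  have : Unique {l : List α // (l : Multiset α) = 0 ∧ P l} :=
    { default := ⟨[], rfl, h⟩
      uniq := fun ⟨l, hl, _⟩ ↦ Subtype.ext (Multiset.coe_eq_zero l |>.1 hl) }
  rw [labelledCard, Nat.card_unique, Multiset.toFinset_zero, Finset.prod_empty, mul_one]

end LabelledCard

section DyckTail

open Finset

/-- The number of steps of `l` that leave height `0` when `l` starts at height `h`, provided its
height never becomes negative. -/
def zeroDepartures (h : ℕ) (l : List Bool) : ℕ :=
  #{k ∈ range l.length | h + (l.take k).count true = (l.take k).count false}

/-- `l` is the remainder of a Dyck path from a point of height `h` on: it never goes below height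
`0` and ends there. It leaves height `0` exactly `m` times. -/
def IsDyckTail (h m : ℕ) (l : List Bool) : Prop :=
  (∀ k, (l.take k).count false ≤ h + (l.take k).count true) ∧
    h + l.count true = l.count false ∧ zeroDepartures h l = m

theorem zeroDepartures_cons (h : ℕ) (b : Bool) (l : List Bool) :
    zeroDepartures h (b :: l) =
      #{k ∈ range l.length |
        h + ((b :: l).take (k + 1)).count true = ((b :: l).take (k + 1)).count false} +
      if h = 0 then 1 else 0 := by
  simp only [zeroDepartures, card_filter, List.length_cons, sum_range_succ', List.take_zero,
    List.count_nil, add_zero]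

theorem zeroDepartures_cons_true (h : ℕ) (l : List Bool) :
    zeroDepartures h (true :: l) = zeroDepartures (h + 1) l + if h = 0 then 1 else 0 := by
  rw [zeroDepartures_cons, zeroDepartures]
  simp [add_assoc, add_comm 1]

theorem zeroDepartures_succ_cons_false (h : ℕ) (l : List Bool) :
    zeroDepartures (h + 1) (false :: l) = zeroDepartures h l := by
  rw [zeroDepartures_cons, zeroDepartures]
  simp [add_right_comm h 1]

theorem isDyckTail_nil {h m : ℕ} : IsDyckTail h m [] ↔ h = 0 ∧ m = 0 := by
  simp [IsDyckTail, zeroDepartures, eq_comm]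

theorem isDyckTail_cons_true {h m : ℕ} {l : List Bool} :
    IsDyckTail h (m + if h = 0 then 1 else 0) (true :: l) ↔ IsDyckTail (h + 1) m l := by
  rw [IsDyckTail, ← Nat.and_forall_add_one, zeroDepartures_cons_true]
  simp [IsDyckTail, add_assoc, add_comm 1]

theorem isDyckTail_succ_cons_false {h m : ℕ} {l : List Bool} :
    IsDyckTail (h + 1) m (false :: l) ↔ IsDyckTail h m l := by
  rw [IsDyckTail, ← Nat.and_forall_add_one, zeroDepartures_succ_cons_false]
  simp [IsDyckTail, add_right_comm h 1]

theorem not_isDyckTail_zero_cons_false {m : ℕ} {l : List Bool} :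
    ¬IsDyckTail 0 m (false :: l) := fun hl ↦ by
  simpa using hl.1 1

theorem not_isDyckTail_zero_zero_cons {b : Bool} {l : List Bool} :
    ¬IsDyckTail 0 0 (b :: l) := fun hl ↦ by
  simpa [zeroDepartures_cons] using hl.2.2

theorem isDyckTail_succ_replicate_append {h m : ℕ} (a : ℕ) {l : List Bool} :
    IsDyckTail (h + 1) m (List.replicate a true ++ l) ↔ IsDyckTail (h + 1 + a) m l := by
  induction a generalizing h with
  | zero => simp
  | succ a ih =>
    rw [List.replicate_succ, List.cons_append, add_comm a, ← add_assoc, ← ih]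
    exact isDyckTail_cons_true (h := h + 1)

theorem zeroDepartures_zero_eq_returnCount_add_one {n : ℕ} (hn : 1 ≤ n) {l : List Bool}
    (hl : l.length = 2 * n) : zeroDepartures 0 l = returnCount n l + 1 := by
  have range_eq : range (2 * n) = insert 0 (Ioo 0 (2 * n)) := by
    ext k
    simp only [mem_range, mem_insert, mem_Ioo]
    lia
  rw [zeroDepartures, hl, range_eq, filter_insert, if_pos (by simp),
    card_insert_of_notMem (by simp), returnCount]
  simp only [zero_add]

theorem isDyckPath_and_returnCount_eq_iff {n m : ℕ} (hn : 1 ≤ n) {l : List Bool} :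
    IsDyckPath n l ∧ returnCount n l = m ↔ l.count true = n ∧ IsDyckTail 0 (m + 1) l := by
  have length_eq : l.count true + l.count false = l.length := List.count_true_add_count_false l
  simp only [IsDyckPath, IsDyckTail, zero_add]
  constructor
  · rintro ⟨⟨h_length, h_true, h_false, h_nonneg⟩, h_returns⟩
    exact ⟨h_true, h_nonneg, h_true.trans h_false.symm,
      by rw [zeroDepartures_zero_eq_returnCount_add_one hn h_length, h_returns]⟩
  · rintro ⟨h_true, h_nonneg, h_end, h_departures⟩
    have h_length : l.length = 2 * n := by lia
    rw [zeroDepartures_zero_eq_returnCount_add_one hn h_length] at h_departures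
    exact ⟨⟨h_length, h_true, h_end ▸ h_true, h_nonneg⟩, Nat.succ.inj h_departures⟩

end DyckTail

section AscentPath

/-- The path whose `i`-th D-step is immediately preceded by exactly `a_i` U-steps. The zero entries
record the D-steps that follow another D-step. -/
def ascentPath : List ℕ → List Bool
  | [] => []
  | a :: l => List.replicate a true ++ false :: ascentPath l

theorem map_length_splitOn_ascentPath (l : List ℕ) :
    ((ascentPath l).splitOn false).map List.length = l ++ [0] := by
  induction l with
  | nil => simp [ascentPath]
  | cons a l ih =>
    rw [ascentPath, List.splitOn_append_cons_self_of_not_mem (by simp), List.map_cons, ih,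
      List.length_replicate, List.cons_append]

theorem ascentPath_injective : Function.Injective ascentPath := fun l l' h ↦ by
  have h_append : l ++ [0] = l' ++ [0] := by
    rw [← map_length_splitOn_ascentPath, h, map_length_splitOn_ascentPath]
  exact List.append_cancel_right h_append

theorem count_true_ascentPath (l : List ℕ) : (ascentPath l).count true = l.sum := by
  induction l with
  | nil => rfl
  | cons a l ih => simp [ascentPath, ih]

theorem count_false_ascentPath (l : List ℕ) : (ascentPath l).count false = l.length := by
  induction l with
  | nil => rfl
  | cons a l ih => simp [ascentPath, ih, List.count_replicate]

theorem exists_ascentPath_append_replicate (p : List Bool) :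
    ∃ l k, p = ascentPath l ++ List.replicate k true := by
  induction p with
  | nil => exact ⟨[], 0, rfl⟩
  | cons b p ih =>
    obtain ⟨l, k, rfl⟩ := ih
    match b, l with
    | false, l => exact ⟨0 :: l, k, rfl⟩
    | true, [] => exact ⟨[], k + 1, rfl⟩
    | true, a :: l => exact ⟨(a + 1) :: l, k, rfl⟩

theorem IsDyckTail.exists_ascentPath_eq {h m : ℕ} {p : List Bool} (hp : IsDyckTail h m p) :
    ∃ l, ascentPath l = p := by
  obtain ⟨l, k, rfl⟩ := exists_ascentPath_append_replicate p
  obtain ⟨h_nonneg, h_end, -⟩ := hp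
  have h_before := h_nonneg (ascentPath l).length
  have hk : k = 0 := by
    simp only [List.take_left', List.count_append, List.count_replicate_self, List.count_replicate,
      beq_false, Bool.not_true, Bool.false_eq_true, ↓reduceIte, add_zero] at h_before h_end
    lia
  exact ⟨l, by simp [hk]⟩

theorem isDyckTail_succ_ascentPath_cons {h m a : ℕ} {l : List ℕ} :
    IsDyckTail (h + 1) m (ascentPath (a :: l)) ↔ IsDyckTail (h + a) m (ascentPath l) := by
  rw [ascentPath, isDyckTail_succ_replicate_append, add_right_comm, isDyckTail_succ_cons_false]

theorem isDyckTail_zero_ascentPath_succ_cons {m a : ℕ} {l : List ℕ} :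
    IsDyckTail 0 (m + 1) (ascentPath ((a + 1) :: l)) ↔ IsDyckTail a m (ascentPath l) := by
  rw [← zero_add a, ← isDyckTail_succ_ascentPath_cons]
  simpa [ascentPath, List.replicate_succ] using isDyckTail_cons_true (h := 0)

theorem not_isDyckTail_zero_ascentPath_zero_cons {m : ℕ} {l : List ℕ} :
    ¬IsDyckTail 0 m (ascentPath (0 :: l)) :=
  not_isDyckTail_zero_cons_false

theorem IsDyckTail.add_count_zero_le_length {h m : ℕ} {l : List ℕ}
    (hl : IsDyckTail h m (ascentPath l)) : m + l.count 0 ≤ l.length := by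
  induction l generalizing h m with
  | nil => simp [(isDyckTail_nil.1 hl).2]
  | cons a l ih =>
    rw [List.count_cons, List.length_cons]
    match h, m, a with
    | h + 1, m, a =>
      have := ih (isDyckTail_succ_ascentPath_cons.1 hl)
      split <;> lia
    | 0, m, 0 => exact absurd hl not_isDyckTail_zero_ascentPath_zero_cons
    | 0, 0, a + 1 => exact absurd hl not_isDyckTail_zero_zero_cons
    | 0, m + 1, a + 1 =>
      have := ih (isDyckTail_zero_ascentPath_succ_cons.1 hl)
      simp only [Nat.reduceBeqDiff, Bool.false_eq_true, ↓reduceIte, add_zero, ge_iff_le]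
      lia

end AscentPath

section Multichoose

open Nat

theorem multichoose_succ_comm (m n : ℕ) : multichoose (m + 1) n = multichoose (n + 1) m := by
  rw [multichoose_eq, multichoose_eq, add_right_comm, add_right_comm n, add_comm n,
    Nat.add_sub_cancel, choose_symm_add]

theorem multichoose_succ_mul_factorial_mul_factorial (m n : ℕ) :
    multichoose (m + 1) n * m ! * n ! = (m + n)! := by
  rw [multichoose_eq, add_right_comm, Nat.add_sub_cancel, add_choose_mul_factorial_mul_factorial]

theorem mul_multichoose_comm (m n : ℕ) : m * multichoose n m = n * multichoose m n := by
  match m, n with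
  | 0, 0 => rfl
  | 0, n + 1 => simp
  | m + 1, 0 => simp
  | m + 1, n + 1 =>
    refine Nat.eq_of_mul_eq_mul_right (Nat.mul_pos m.factorial_pos n.factorial_pos) ?_
    have h_left := multichoose_succ_mul_factorial_mul_factorial n (m + 1)
    have h_right := multichoose_succ_mul_factorial_mul_factorial m (n + 1)
    rw [factorial_succ] at h_left h_right
    rw [add_left_comm, ← add_assoc] at h_right
    linear_combination h_left - h_right

theorem mul_multichoose_zero_eq_zero_of_le {m n : ℕ} (h : m ≤ n) : m * multichoose 0 n = 0 := by
  cases n with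
  | zero => rw [Nat.le_zero.1 h, zero_mul]
  | succ n => rw [multichoose_zero_succ, mul_zero]

end Multichoose

section TailCount

open Nat

/-- The entries of an ascent sequence (see `ascentPath`) with `z` zeros and whose nonzero entries
are `b + 1` for `b ∈ u`. -/
def ascentEntries (z : ℕ) (u : Multiset ℕ) : Multiset ℕ :=
  Multiset.replicate z 0 + u.map (· + 1)

theorem count_zero_ascentEntries (z : ℕ) (u : Multiset ℕ) : (ascentEntries z u).count 0 = z := by
  simp [ascentEntries]

theorem count_succ_ascentEntries (z : ℕ) (u : Multiset ℕ) (b : ℕ) :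
    (ascentEntries z u).count (b + 1) = u.count b := by
  rw [ascentEntries, Multiset.count_add, Multiset.count_replicate, if_neg (succ_ne_zero b).symm,
    zero_add, Multiset.count_map_eq_count' _ _ (add_left_injective 1)]

theorem card_ascentEntries (z : ℕ) (u : Multiset ℕ) :
    (ascentEntries z u).card = z + u.card := by
  simp [ascentEntries]

theorem sum_ascentEntries (z : ℕ) (u : Multiset ℕ) :
    (ascentEntries z u).sum = u.sum + u.card := by
  simp [ascentEntries, Multiset.sum_map_add]

theorem labelledCard_ascentEntries_eq_add_sum {z : ℕ} {u : Multiset ℕ} (h : z ≠ 0 ∨ u ≠ 0)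
    (P : List ℕ → Prop) :
    labelledCard (ascentEntries z u) P =
      z * labelledCard (ascentEntries (z - 1) u) (fun l ↦ P (0 :: l)) +
        (u.map fun b ↦
          labelledCard (ascentEntries z (u.erase b)) fun l ↦ P ((b + 1) :: l)).sum := by
  have h_ne : ascentEntries z u ≠ 0 := by
    rw [← Multiset.card_pos, card_ascentEntries]
    rcases h with hz | hu
    · lia
    · have := Multiset.card_pos.2 hu
      lia
  have erase_succ {b : ℕ} (hb : b ∈ u) :
      (ascentEntries z u).erase (b + 1) = ascentEntries z (u.erase b) := by
    rw [ascentEntries, Multiset.erase_add_right_pos _ (Multiset.mem_map_of_mem (· + 1) hb),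
      ← Multiset.map_erase _ (add_left_injective 1), ascentEntries]
  have map_split (f : ℕ → ℕ) :
      ((ascentEntries z u).map f).sum = z * f 0 + (u.map fun b ↦ f (b + 1)).sum := by
    simp [ascentEntries]
  rw [labelledCard_eq_sum_cons h_ne, map_split]
  congr 1
  · cases z with
    | zero => simp only [zero_mul]
    | succ z =>
      simp only [ascentEntries, Multiset.replicate_succ, Multiset.cons_add,
        Multiset.erase_cons_head, Nat.add_sub_cancel]
  · exact congrArg _ (Multiset.map_congr rfl fun b hb ↦ by rw [erase_succ hb])

/-- The number of arrangements of `ascentEntries z u`, with equal entries labelled, into the ascent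
sequence of a path that satisfies `IsDyckTail h m`. -/
noncomputable def tailCount (z : ℕ) (u : Multiset ℕ) (h m : ℕ) : ℕ :=
  labelledCard (ascentEntries z u) fun l ↦ IsDyckTail h m (ascentPath l)

theorem tailCount_eq_zero_of_card_lt {z h m : ℕ} {u : Multiset ℕ} (hm : u.card < m) :
    tailCount z u h m = 0 := by
  refine labelledCard_eq_zero fun l hl h_tail ↦ ?_
  have h_le := h_tail.add_count_zero_le_length
  rw [← Multiset.coe_count, ← Multiset.coe_card, hl, count_zero_ascentEntries,
    card_ascentEntries] at h_le
  lia

theorem tailCount_zero_zero {z : ℕ} {u : Multiset ℕ} (hu : u ≠ 0) : tailCount z u 0 0 = 0 := by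
  rw [tailCount, labelledCard_ascentEntries_eq_add_sum (.inr hu)]
  simp [labelledCard_eq_zero, ascentPath, List.replicate_succ, not_isDyckTail_zero_zero_cons]

theorem tailCount_zero_succ {z m : ℕ} {u : Multiset ℕ} (hu : u ≠ 0) :
    tailCount z u 0 (m + 1) = (u.map fun b ↦ tailCount z (u.erase b) b m).sum := by
  rw [tailCount, labelledCard_ascentEntries_eq_add_sum (.inr hu),
    labelledCard_eq_zero fun _ _ ↦ not_isDyckTail_zero_ascentPath_zero_cons, mul_zero, zero_add]
  simp only [isDyckTail_zero_ascentPath_succ_cons, tailCount]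

theorem tailCount_succ_succ (z h m : ℕ) (u : Multiset ℕ) :
    tailCount (z + 1) u (h + 1) m = (z + 1) * tailCount z u h m +
      (u.map fun b ↦ tailCount (z + 1) (u.erase b) (h + 1 + b) m).sum := by
  rw [tailCount, labelledCard_ascentEntries_eq_add_sum (.inl z.add_one_ne_zero)]
  simp only [isDyckTail_succ_ascentPath_cons, Nat.add_sub_cancel, add_zero, tailCount, add_assoc,
    add_comm 1]

theorem tailCount_zero_entries (z : ℕ) : tailCount z 0 z 0 = z ! := by
  induction z with
  | zero => exact labelledCard_zero (isDyckTail_nil.2 ⟨rfl, rfl⟩)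
  | succ z ih => rw [tailCount_succ_succ, ih, Multiset.map_zero, Multiset.sum_zero, factorial_succ,
      add_zero]

theorem sum_map_tailCount_erase {q z h m j : ℕ} {u : Multiset ℕ} (hq : m + j = q)
    (h_card : u.card = q + 1) (h_sum : u.sum + h = z)
    (ih : ∀ b ∈ u, q ≠ 0 → tailCount z (u.erase b) (h + b) m =
      (q - 1)! * z ! * ((h + b) * multichoose j z + m * multichoose z j)) :
    (u.map fun b ↦ tailCount z (u.erase b) (h + b) m).sum =
      q ! * z ! * (h * multichoose j z + (m + 1) * multichoose z j) := by
  cases q with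
  | zero =>
    obtain ⟨rfl, rfl⟩ : m = 0 ∧ j = 0 := by lia
    obtain ⟨b, rfl⟩ := Multiset.card_eq_one.1 h_card
    obtain rfl : h + b = z := by simpa [add_comm] using h_sum
    simp [tailCount_zero_entries, mul_multichoose_zero_eq_zero_of_le]
  | succ q =>
    have h_comm := mul_multichoose_comm z j
    rw [Multiset.map_congr rfl fun b hb ↦ ih b hb q.succ_ne_zero, Multiset.sum_map_mul_left,
      Multiset.sum_map_add, Multiset.sum_map_mul_right, Multiset.sum_map_add]
    simp only [Multiset.map_const', Multiset.sum_replicate, Multiset.map_id', smul_eq_mul, h_card,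
      factorial_succ, Nat.add_sub_cancel]
    linear_combination q ! * z ! * multichoose j z * h_sum + q ! * z ! * multichoose z j * hq +
      q ! * z ! * h_comm

theorem tailCount_eq {q z h m j : ℕ} {u : Multiset ℕ} (hq : m + j = q + 1)
    (h_card : u.card = q + 1) (h_sum : u.sum + h = z) :
    tailCount z u h m = q ! * z ! * (h * multichoose j z + m * multichoose z j) := by
  have hu : u ≠ 0 := Multiset.card_pos.1 (by lia)
  have card_erase {b : ℕ} (hb : b ∈ u) : (u.erase b).card + 1 = u.card :=
    Multiset.card_erase_add_one hb
  have sum_erase {b : ℕ} (hb : b ∈ u) : b + (u.erase b).sum = u.sum := Multiset.sum_erase hb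
  match h, m, j with
  | 0, 0, j => rw [tailCount_zero_zero hu]; simp
  | 0, m + 1, j =>
    have := sum_map_tailCount_erase (h := 0) (m := m) (j := j) (by lia) h_card h_sum
      fun b hb hq₀ ↦ tailCount_eq (by lia) (by grind) (by grind)
    rw [tailCount_zero_succ hu]
    simpa only [zero_add] using this
  | h + 1, m, 0 =>
    obtain ⟨c, rfl⟩ : ∃ c, z = c + 1 := ⟨z - 1, by lia⟩
    have h_sum_zero : (u.map fun b ↦ tailCount (c + 1) (u.erase b) (h + 1 + b) m).sum = 0 := by
      rw [Multiset.map_congr rfl fun b hb ↦ tailCount_eq_zero_of_card_lt (by grind)]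
      simp
    rw [tailCount_succ_succ, h_sum_zero, tailCount_eq hq h_card (by lia : u.sum + h = c),
      mul_multichoose_zero_eq_zero_of_le (by lia : h ≤ c), multichoose_zero_succ,
      multichoose_zero_right, multichoose_zero_right, factorial_succ]
    ring
  | h + 1, m, j + 1 =>
    obtain ⟨c, rfl⟩ : ∃ c, z = c + 1 := ⟨z - 1, by lia⟩
    rw [tailCount_succ_succ, tailCount_eq hq h_card (by lia : u.sum + h = c),
      sum_map_tailCount_erase (j := j) (by lia) h_card h_sum fun b hb hq₀ ↦
      tailCount_eq (by lia) (by grind) (by grind),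
      multichoose_succ_succ, multichoose_succ_succ, multichoose_succ_comm j c, factorial_succ]
    ring
termination_by z + q

end TailCount

section AscentType

open scoped Nat

variable {n : ℕ}

/-- The multiset of ascent lengths of a path of ascent type `r`, each diminished by one. -/
def ascentType (r : Fin n → ℕ) : Multiset ℕ :=
  ∑ i, Multiset.replicate (r i) (i : ℕ)

theorem count_ascentType (r : Fin n → ℕ) (i : Fin n) : (ascentType r).count (i : ℕ) = r i := by
  simp [ascentType, Multiset.count_sum', Multiset.count_replicate, Fin.val_inj]

theorem lt_of_mem_ascentType {r : Fin n → ℕ} {b : ℕ} (hb : b ∈ ascentType r) : b < n := by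
  obtain ⟨i, -, hi⟩ := Multiset.mem_sum.1 hb
  exact Multiset.eq_of_mem_replicate hi ▸ i.isLt

theorem card_ascentType (r : Fin n → ℕ) : (ascentType r).card = ∑ i, r i := by
  simp [ascentType]

theorem sum_ascentType_add_sum (r : Fin n → ℕ) :
    (ascentType r).sum + ∑ i, r i = ∑ i, (i.1 + 1) * r i := by
  simp [ascentType, Multiset.sum_sum, add_one_mul, Finset.sum_add_distrib, mul_comm (r _)]

theorem prod_factorial_count_ascentEntries_ascentType (z : ℕ) (r : Fin n → ℕ) :
    ∏ a ∈ (ascentEntries z (ascentType r)).toFinset,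
      ((ascentEntries z (ascentType r)).count a)! = z ! * ∏ i, (r i)! := by
  have h_subset : (ascentEntries z (ascentType r)).toFinset ⊆ Finset.range (n + 1) := fun a ha ↦ by
    rw [Multiset.mem_toFinset, ascentEntries, Multiset.mem_add, Multiset.mem_map] at ha
    rw [Finset.mem_range]
    obtain ha | ⟨b, hb, rfl⟩ := ha
    · exact Multiset.eq_of_mem_replicate ha ▸ n.succ_pos
    · exact Nat.succ_lt_succ (lt_of_mem_ascentType hb)
  rw [Finset.prod_subset h_subset fun a _ ha ↦ by
      rw [Multiset.count_eq_zero.2 (mt Multiset.mem_toFinset.2 ha), Nat.factorial_zero],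
    Finset.prod_range_succ', count_zero_ascentEntries, mul_comm, Finset.prod_range]
  simp only [count_succ_ascentEntries, count_ascentType]

theorem hasAscentType_ascentPath_iff {r : Fin n → ℕ} {l : List ℕ} :
    HasAscentType n (ascentPath l) r ↔ ∀ i : Fin n, l.count (i.1 + 1) = r i := by
  simp [HasAscentType, map_length_splitOn_ascentPath]

theorem map_succ_ascentType_le {r : Fin n → ℕ} {s : Multiset ℕ}
    (hs : ∀ i : Fin n, s.count (i.1 + 1) = r i) : (ascentType r).map (· + 1) ≤ s := by
  refine Multiset.le_iff_count.2 fun a ↦ ?_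
  cases a with
  | zero => simp
  | succ b =>
    rw [Multiset.count_map_eq_count' _ _ (add_left_injective 1)]
    by_cases hb : b < n
    · exact ((count_ascentType r ⟨b, hb⟩).trans (hs ⟨b, hb⟩).symm).le
    · rw [Multiset.count_eq_zero.2 (mt lt_of_mem_ascentType hb)]
      exact Nat.zero_le _

theorem coe_eq_ascentEntries_iff {r : Fin n → ℕ} (hr : ∑ i, (i.1 + 1) * r i = n) {l : List ℕ} :
    (l : Multiset ℕ) = ascentEntries (ascentType r).sum (ascentType r) ↔
      l.length = n ∧ l.sum = n ∧ HasAscentType n (ascentPath l) r := by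
  rw [hasAscentType_ascentPath_iff]
  have h_size := sum_ascentType_add_sum r
  rw [hr, ← card_ascentType] at h_size
  constructor
  · intro hl
    refine ⟨?_, ?_, fun i ↦ ?_⟩
    · rw [← Multiset.coe_card, hl, card_ascentEntries, h_size]
    · rw [← Multiset.sum_coe, hl, sum_ascentEntries, h_size]
    · rw [← Multiset.coe_count, hl, count_succ_ascentEntries, count_ascentType]
  · rintro ⟨h_length, h_sum, h_count⟩
    obtain ⟨rest, h_rest⟩ := Multiset.le_iff_exists_add.1 (map_succ_ascentType_le
      fun i ↦ (Multiset.coe_count ..).trans (h_count i))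
    have h_rest_sum := congrArg Multiset.sum h_rest
    have h_rest_card := congrArg Multiset.card h_rest
    rw [Multiset.sum_coe, h_sum, Multiset.sum_add, Multiset.sum_map_add,
      Multiset.map_id', Multiset.map_const', Multiset.sum_replicate, smul_eq_mul,
      mul_one] at h_rest_sum
    rw [Multiset.coe_card, h_length, Multiset.card_add, Multiset.card_map] at h_rest_card
    have h_rest_zero : rest = Multiset.replicate (ascentType r).sum 0 :=
      Multiset.eq_replicate.2 ⟨by lia, Multiset.sum_eq_zero_iff.1 (by lia)⟩
    rw [h_rest, h_rest_zero, add_comm, ascentEntries]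

end AscentType

theorem isDyckPath_ascentPath_iff {n m : ℕ} (hn : 1 ≤ n) {r : Fin n → ℕ}
    (hr : ∑ i, (i.1 + 1) * r i = n) {l : List ℕ} :
    IsDyckPath n (ascentPath l) ∧ HasAscentType n (ascentPath l) r ∧
        returnCount n (ascentPath l) = m ↔
      (l : Multiset ℕ) = ascentEntries (ascentType r).sum (ascentType r) ∧
        IsDyckTail 0 (m + 1) (ascentPath l) := by
  have h_end (h : IsDyckTail 0 (m + 1) (ascentPath l)) : l.sum = l.length := by
    simpa [count_true_ascentPath, count_false_ascentPath] using h.2.1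
  rw [and_left_comm, isDyckPath_and_returnCount_eq_iff hn, count_true_ascentPath,
    coe_eq_ascentEntries_iff hr]
  constructor
  · rintro ⟨h_type, h_sum, h_tail⟩
    exact ⟨⟨h_end h_tail ▸ h_sum, h_sum, h_type⟩, h_tail⟩
  · rintro ⟨⟨-, h_sum, h_type⟩, h_tail⟩
    exact ⟨h_type, h_sum, h_tail⟩

theorem natCard_dyckPath_eq_natCard_ascentSequence {n : ℕ} (hn : 1 ≤ n) (m : ℕ) {r : Fin n → ℕ}
    (hr : ∑ i, (i.1 + 1) * r i = n) :
    Nat.card {p : List Bool // IsDyckPath n p ∧ HasAscentType n p r ∧ returnCount n p = m} =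
      Nat.card {l : List ℕ // (l : Multiset ℕ) = ascentEntries (ascentType r).sum (ascentType r) ∧
        IsDyckTail 0 (m + 1) (ascentPath l)} := by
  symm
  refine Nat.card_eq_of_bijective
    (Subtype.map ascentPath fun l ↦ (isDyckPath_ascentPath_iff hn hr).2)
    ⟨Subtype.map_injective _ ascentPath_injective, ?_⟩
  rintro ⟨p, hp⟩
  obtain ⟨l, rfl⟩ :=
    ((isDyckPath_and_returnCount_eq_iff hn).1 ⟨hp.1, hp.2.2⟩).2.exists_ascentPath_eq
  exact ⟨⟨l, (isDyckPath_ascentPath_iff hn hr).1 hp⟩, rfl⟩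

open Nat in
theorem natCard_dyckPath_mul_prod_factorial {n q m j : ℕ} {r : Fin n → ℕ}
    (hr : ∑ i, (i.1 + 1) * r i = n) (hq : ∑ i, r i = q + 1) (hj : m + j = q) :
    Nat.card {p : List Bool // IsDyckPath n p ∧ HasAscentType n p r ∧ returnCount n p = m} *
        ∏ i, (r i)! =
      (m + 1) * q ! * multichoose (n - (q + 1)) j := by
  have h_size := sum_ascentType_add_sum r
  rw [hr, hq] at h_size
  have key := tailCount_eq (m := m + 1) (j := j) (h := 0) (by lia) ((card_ascentType r).trans hq)
    (add_zero _)
  rw [tailCount, labelledCard, prod_factorial_count_ascentEntries_ascentType,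
    ← natCard_dyckPath_eq_natCard_ascentSequence (by lia) m hr] at key
  rw [show n - (q + 1) = (ascentType r).sum by lia]
  refine Nat.eq_of_mul_eq_mul_right (factorial_pos (ascentType r).sum) ?_
  linear_combination key

/-- The number `N` of Dyck paths of length `2n` with exactly `m - 1` returns and ascent type
`r` satisfies `N · (n - |r| - 1)! · (|r| - m)! · r! = m · (n - m - 1)! · (|r| - 1)!`. -/
theorem card_dyck_returns_of_ascent_type (n m : ℕ) (hn : 1 ≤ n) (hm : 1 ≤ m)
    (r : Fin n → ℕ) (hrv : ∑ i, (i.1 + 1) * r i = n) (hr : ∑ i, r i < n)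
    (hmr : m ≤ ∑ i, r i) (hmn : m < n) :
    Nat.card {l : List Bool // IsDyckPath n l ∧ HasAscentType n l r ∧
        returnCount n l = m - 1} *
        (n - (∑ i, r i) - 1).factorial * ((∑ i, r i) - m).factorial * ∏ i, (r i).factorial =
      m * (n - m - 1).factorial * ((∑ i, r i) - 1).factorial := by
  obtain ⟨m, rfl⟩ : ∃ m', m = m' + 1 := ⟨m - 1, by lia⟩
  obtain ⟨j, hj⟩ : ∃ j, ∑ i, r i = m + j + 1 := ⟨∑ i, r i - (m + 1), by lia⟩
  obtain ⟨c, hc⟩ : ∃ c, n = c + (m + j + 2) := ⟨n - (∑ i, r i + 1), by lia⟩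
  have h_paths := natCard_dyckPath_mul_prod_factorial hrv hj rfl
  have h_multichoose := multichoose_succ_mul_factorial_mul_factorial c j
  rw [show n - (m + j + 1) = c + 1 by lia] at h_paths
  rw [hj, show n - (m + j + 1) - 1 = c by lia, show m + j + 1 - (m + 1) = j by lia,
    show n - (m + 1) - 1 = c + j by lia, Nat.add_sub_cancel, Nat.add_sub_cancel]
  linear_combination c.factorial * j.factorial * h_paths +
    (m + 1) * (m + j).factorial * h_multichoose
end

section
/- Let n ≥ 1, let v = (1, 2, …, n), let m ≥ 1, and let r ∈ ℕ^n. Then, as an identity of polynomials in ℚ[x], the sum of the products A_{r^{(1)}}(x) · A_{r^{(2)}}(x) ⋯ A_{r^{(m)}}(x) over all m-tuples (r^{(1)}, …, r^{(m)}) of vectors in ℕ^n with r^{(1)} + ⋯ + r^{(m)} = r equals A_r(m·x), the composition of the polynomial A_r(x) with the polynomial m·x. -/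
open Polynomial

/-- Zeng's polynomial `A_r(x) ∈ ℚ[x]` for `v = (1, 2, …, n)`:
`A_r(x) = 1` if `r = 0`, and otherwise
`A_r(x) = (1/r!) · x · (x + r·v - 1)(x + r·v - 2) ⋯ (x + r·v - |r| + 1)`. -/
noncomputable def Apoly {n : ℕ} (r : Fin n → ℕ) : Polynomial ℚ :=
  if r = 0 then 1 else
    C (((∏ i, (r i).factorial : ℕ) : ℚ))⁻¹ *
      (X * ∏ j ∈ Finset.range ((∑ i, r i) - 1),
        (X + C (((∑ i, (i.1 + 1) * r i : ℕ) : ℚ) - 1 - (j : ℚ))))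

/-!
Write `F x` for the formal power series `∑ r, A_r(x) t^r`. The polynomials `A_r` satisfy `F 0 = 1`
and the difference equation `F (x + 1) = F x + ∑ i, t i * F (x + v i)`. For fixed `y`, both
`F x * F y` and `F (x + y)` solve this equation with value `F y` at `x = 0`, so by induction on `r`
their `r`-th coefficients have the same differences under `x ↦ x + 1`; being polynomials in `x`,
they agree. Hence `F` turns sums into products, which read coefficientwise is the convolution
identity, for every weight vector `v` and with a separate variable for each factor.
-/

open scoped Nat

theorem eq_of_eval_add_one_sub_eval {R : Type*} [CommRing R] [IsDomain R] [CharZero R]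
    {p q : R[X]} (h0 : p.eval 0 = q.eval 0)
    (hstep : ∀ x, p.eval (x + 1) - p.eval x = q.eval (x + 1) - q.eval x) : p = q := by
  have hnat (k : ℕ) : p.eval (k : R) = q.eval (k : R) := by
    induction k with
    | zero => simpa using h0
    | succ k ih => simpa [ih] using hstep k
  refine eq_of_infinite_eval_eq p q ((Set.infinite_range_of_injective Nat.cast_injective).mono ?_)
  rintro _ ⟨k, rfl⟩
  exact hnat k

theorem descPochhammer_succ_eval_add_one {R : Type*} [CommRing R] (k : ℕ) (x : R) :
    (descPochhammer R (k + 1)).eval (x + 1) = (x + 1) * (descPochhammer R k).eval x := by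
  simp [descPochhammer_succ_left, eval_comp]

theorem coeff_X_mul_eq_ite {σ R : Type*} [Semiring R] (i : σ) (d : σ →₀ ℕ)
    (f : MvPowerSeries σ R) :
    MvPowerSeries.coeff d (MvPowerSeries.X i * f) =
      if d i = 0 then 0 else MvPowerSeries.coeff (d - Finsupp.single i 1) f := by
  classical
  rw [MvPowerSeries.X, MvPowerSeries.coeff_monomial_mul]
  simp [Finsupp.single_le_iff, Nat.one_le_iff_ne_zero, ite_not]

theorem prod_factorial_add_single {ι : Type*} [Fintype ι] [DecidableEq ι] (q : ι → ℕ) (i : ι) :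
    ∏ j, ((q + Pi.single i 1 : ι → ℕ) j)! = (q i + 1) * ∏ j, (q j)! := by
  rw [Fintype.prod_eq_mul_prod_compl i, Fintype.prod_eq_mul_prod_compl i fun j => (q j)!,
    ← mul_assoc]
  congr 1
  · simp [Nat.factorial_succ]
  · exact Finset.prod_congr rfl fun j hj => by simp_all

section RaneyPolynomials

variable {ι K : Type*} [Fintype ι] [Field K]

/-- Zeng's polynomial `A_r(x) = x (x + r·v - 1)_{|r| - 1} / r!` for an arbitrary weight vector `v`,
with `A_0 = 1`; the case `v = (1, 2, …, n)` is `Apoly`. -/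
noncomputable def raneyPoly (v : ι → K) (r : ι → ℕ) : K[X] :=
  if r = 0 then 1 else
    C ((∏ i, (r i)! : ℕ) : K)⁻¹ *
      (X * (descPochhammer K (∑ i, r i - 1)).comp (X + C (∑ i, r i * v i - 1)))

theorem Apoly_eq_raneyPoly {n : ℕ} (r : Fin n → ℕ) :
    Apoly r = raneyPoly (fun i : Fin n => (i : ℚ) + 1) r := by
  refine Polynomial.funext fun x => ?_
  unfold Apoly raneyPoly
  split_ifs
  · rfl
  · simp [eval_prod, descPochhammer_eval_eq_prod_range, mul_comm, add_sub_assoc]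

theorem raneyPoly_zero (v : ι → K) : raneyPoly v 0 = 1 := if_pos rfl

theorem raneyPoly_eval_zero (v : ι → K) (r : ι → ℕ) :
    (raneyPoly v r).eval 0 = if r = 0 then 1 else 0 := by
  unfold raneyPoly
  split_ifs <;> simp

/-- The generating series `∑ r, A_r(x) t ^ r`, evaluated at a fixed `x`. -/
noncomputable def raneySeries (v : ι → K) (x : K) : MvPowerSeries ι K :=
  fun r => (raneyPoly v r).eval x

theorem coeff_raneySeries (v : ι → K) (x : K) (r : ι →₀ ℕ) :
    MvPowerSeries.coeff r (raneySeries v x) = (raneyPoly v r).eval x := rfl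

theorem raneySeries_zero (v : ι → K) : raneySeries v 0 = 1 := by
  classical
  ext r
  simp [coeff_raneySeries, raneyPoly_eval_zero, MvPowerSeries.coeff_one]

variable [CharZero K]

/- Multiplied by `x + r·v`, the two cases of the definition merge: this is
`A_r(x) = x / (x + r·v) * (x + r·v)_{|r|} / r!`. -/
theorem add_mul_factorial_mul_raneyPoly_eval (v : ι → K) (r : ι → ℕ) (x : K) :
    (x + ∑ i, r i * v i) * ((∏ i, (r i)! : ℕ) * (raneyPoly v r).eval x) =
      x * (descPochhammer K (∑ i, r i)).eval (x + ∑ i, r i * v i) := by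
  by_cases hr : r = 0
  · simp [hr, raneyPoly_zero]
  have hfact : ((∏ i, (r i)! : ℕ) : K) ≠ 0 :=
    Nat.cast_ne_zero.mpr (Nat.prod_factorial_pos _ _).ne'
  obtain ⟨k, hk⟩ : ∃ k, ∑ i, r i = k + 1 :=
    Nat.exists_eq_succ_of_ne_zero fun h => hr (funext fun i => by simp_all)
  rw [raneyPoly, if_neg hr, hk, descPochhammer_succ_left]
  simp only [eval_mul, eval_C, eval_X, eval_comp, eval_add, eval_sub, eval_one,
    Nat.add_sub_cancel, add_sub_assoc]
  field_simp

theorem add_mul_factorial_mul_raneyPoly_sub_single_eval [DecidableEq ι] (v : ι → K) (r : ι → ℕ)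
    (i : ι) (x : K) :
    (x + ∑ j, r j * v j) * ((∏ j, (r j)! : ℕ) *
        if r i = 0 then 0 else (raneyPoly v (r - Pi.single i 1)).eval (x + v i)) =
      r i * (x + v i) * (descPochhammer K (∑ j, r j - 1)).eval (x + ∑ j, r j * v j) := by
  split_ifs with hri
  · simp [hri]
  have hle : Pi.single i 1 ≤ r :=
    update_le_iff.mpr ⟨Nat.one_le_iff_ne_zero.mpr hri, fun _ _ => zero_le⟩
  obtain ⟨q, rfl⟩ : ∃ q, r = q + Pi.single i 1 :=
    ⟨r - Pi.single i 1, (tsub_add_cancel_of_le hle).symm⟩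
  have hsize : ∑ j, (q + Pi.single i 1 : ι → ℕ) j - 1 = ∑ j, q j := by
    simp [Finset.sum_add_distrib]
  have hweight : x + ∑ j, ((q + Pi.single i 1 : ι → ℕ) j : K) * v j =
      x + v i + ∑ j, q j * v j := by
    simp only [Pi.add_apply, Nat.cast_add, add_mul, Finset.sum_add_distrib, Pi.single_apply,
      Nat.cast_ite, Nat.cast_one, Nat.cast_zero, ite_mul, one_mul, zero_mul, Finset.sum_ite_eq',
      Finset.mem_univ, if_true]
    ring
  rw [hsize, hweight, prod_factorial_add_single, add_tsub_cancel_right, Pi.add_apply,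
    Pi.single_eq_same, Nat.cast_mul, Nat.cast_add_one]
  linear_combination
    ((q i : K) + 1) * add_mul_factorial_mul_raneyPoly_eval v q (x + v i)

theorem add_mul_factorial_mul_sum_raneyPoly_sub_single_eval [DecidableEq ι] (v : ι → K)
    (r : ι → ℕ) (x : K) :
    (x + ∑ i, r i * v i) * ((∏ i, (r i)! : ℕ) * ∑ i,
        if r i = 0 then 0 else (raneyPoly v (r - Pi.single i 1)).eval (x + v i)) =
      ((∑ i, r i : ℕ) * x + ∑ i, r i * v i) *
        (descPochhammer K (∑ i, r i - 1)).eval (x + ∑ i, r i * v i) := by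
  have hcoeff : (∑ i, r i : ℕ) * x + ∑ i, r i * v i = ∑ i, r i * (x + v i) := by
    simp only [Nat.cast_sum, mul_add, Finset.sum_add_distrib, Finset.sum_mul]
  rw [hcoeff, Finset.mul_sum, Finset.mul_sum, Finset.sum_mul]
  exact Finset.sum_congr rfl fun i _ =>
    add_mul_factorial_mul_raneyPoly_sub_single_eval v r i x

theorem raneyPoly_comp_X_add_one [DecidableEq ι] (v : ι → K) (r : ι → ℕ) :
    (raneyPoly v r).comp (X + 1) = raneyPoly v r +
      ∑ i, if r i = 0 then 0 else (raneyPoly v (r - Pi.single i 1)).comp (X + C (v i)) := by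
  by_cases hr : r = 0
  · simp [hr, raneyPoly_zero]
  obtain ⟨k, hk⟩ : ∃ k, ∑ i, r i = k + 1 :=
    Nat.exists_eq_succ_of_ne_zero fun h => hr (funext fun i => by simp_all)
  set w : K := ∑ i, r i * v i with hw
  have hfact : ((∏ i, (r i)! : ℕ) : K) ≠ 0 :=
    Nat.cast_ne_zero.mpr (Nat.prod_factorial_pos _ _).ne'
  have hfactor : (X + C w) * (X + C (w + 1)) * C ((∏ i, (r i)! : ℕ) : K) ≠ 0 :=
    mul_ne_zero (mul_ne_zero (X_add_C_ne_zero _) (X_add_C_ne_zero _)) (C_ne_zero.mpr hfact)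
  refine mul_left_cancel₀ hfactor (Polynomial.funext fun x => ?_)
  have hshift := add_mul_factorial_mul_raneyPoly_eval v r (x + 1)
  have hself := add_mul_factorial_mul_raneyPoly_eval v r x
  have hsub := add_mul_factorial_mul_sum_raneyPoly_sub_single_eval v r x
  rw [← hw, hk, add_right_comm, descPochhammer_succ_eval_add_one] at hshift
  rw [← hw, hk, descPochhammer_succ_eval] at hself
  rw [← hw, hk, Nat.add_sub_cancel, Nat.cast_add_one] at hsub
  simp only [eval_mul, eval_add, eval_X, eval_C, eval_comp, eval_one, eval_finsetSum,
    apply_ite (eval x), eval_zero]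
  linear_combination (x + w) * hshift - (x + w + 1) * (hself + hsub)

theorem raneySeries_add_one (v : ι → K) (x : K) :
    raneySeries v (x + 1) =
      raneySeries v x + ∑ i, MvPowerSeries.X i * raneySeries v (x + v i) := by
  classical
  ext r
  have hrec := congrArg (eval x) (raneyPoly_comp_X_add_one v r)
  simpa [coeff_X_mul_eq_ite, coeff_raneySeries, eval_comp, eval_finsetSum, apply_ite (eval x),
    Finsupp.single_eq_pi_single] using hrec

theorem raneySeries_add (v : ι → K) (x y : K) :
    raneySeries v (x + y) = raneySeries v x * raneySeries v y := by
  classical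
  ext r
  induction r using WellFoundedLT.induction generalizing x y with
  | ind r ih =>
  let p : K[X] := (raneyPoly v r).comp (X + C y)
  let q : K[X] := ∑ a ∈ Finset.HasAntidiagonal.antidiagonal r,
    raneyPoly v a.1 * C ((raneyPoly v a.2).eval y)
  have hp (x : K) : p.eval x = MvPowerSeries.coeff r (raneySeries v (x + y)) := by
    simp [p, coeff_raneySeries]
  have hq (x : K) : q.eval x = MvPowerSeries.coeff r (raneySeries v x * raneySeries v y) := by
    simp [q, MvPowerSeries.coeff_mul, coeff_raneySeries, eval_finsetSum]
  have hpq : p = q := by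
    refine eq_of_eval_add_one_sub_eval (by simp [hp, hq, raneySeries_zero]) fun x => ?_
    simp only [hp, hq, add_right_comm x 1 y, raneySeries_add_one, add_mul, Finset.sum_mul, map_add,
      map_sum, add_sub_cancel_left, mul_assoc, coeff_X_mul_eq_ite]
    refine Finset.sum_congr rfl fun i _ => ?_
    split_ifs with hri
    · rfl
    · have hlt : r - Finsupp.single i 1 < r :=
        lt_of_le_of_ne tsub_le_self fun h => by
          have := DFunLike.congr_fun h i
          simp only [Finsupp.tsub_apply, Finsupp.single_eq_same] at this
          lia
      rw [add_right_comm x y, ih _ hlt]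
  rw [← hp, ← hq, hpq]

theorem raneySeries_sum {κ : Type*} (v : ι → K) (s : Finset κ) (x : κ → K) :
    raneySeries v (∑ k ∈ s, x k) = ∏ k ∈ s, raneySeries v (x k) := by
  induction s using Finset.cons_induction with
  | empty => simp [raneySeries_zero]
  | cons k s hk ih => simp [raneySeries_add, ih]

theorem sum_prod_raneyPoly_eval {κ : Type*} [Fintype κ] (v : ι → K) (x : κ → K) (r : ι → ℕ)
    (S : Finset (κ → ι → ℕ)) (hS : ∀ s, s ∈ S ↔ ∑ k, s k = r) :
    ∑ s ∈ S, ∏ k, (raneyPoly v (s k)).eval (x k) = (raneyPoly v r).eval (∑ k, x k) := by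
  classical
  let e : (κ → ι → ℕ) ≃ (κ →₀ ι →₀ ℕ) :=
    (Equiv.piCongrRight fun _ => Finsupp.equivFunOnFinite.symm).trans
      Finsupp.equivFunOnFinite.symm
  have hcoeff := congrArg (MvPowerSeries.coeff (Finsupp.equivFunOnFinite.symm r))
    (raneySeries_sum v Finset.univ x)
  rw [MvPowerSeries.coeff_prod] at hcoeff
  refine (Finset.sum_equiv e (fun s => ?_) fun s _ => rfl).trans hcoeff.symm
  simp [hS, e, funext_iff, Finsupp.ext_iff]

end RaneyPolynomials

theorem Apoly_convolution_general {ι κ K : Type*} [Fintype ι] [Fintype κ] [Field K] [CharZero K]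
    (v : ι → K) (p : κ → K[X]) (r : ι → ℕ) (S : Finset (κ → ι → ℕ))
    (hS : ∀ s, s ∈ S ↔ ∑ k, s k = r) :
    ∑ s ∈ S, ∏ k, (raneyPoly v (s k)).comp (p k) = (raneyPoly v r).comp (∑ k, p k) :=
  Polynomial.funext fun x => by
    simpa only [eval_finsetSum, eval_prod, eval_comp] using
      sum_prod_raneyPoly_eval v (fun k => (p k).eval x) r S hS

/-- (Raney convolution) The sum of `A_{r⁽¹⁾}(x) ⋯ A_{r⁽ᵐ⁾}(x)` over all `m`-tuples of vectors
in `ℕⁿ` summing to `r` equals `A_r(m·x)`. -/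
theorem Apoly_convolution (n : ℕ) (hn : 1 ≤ n) (m : ℕ) (hm : 1 ≤ m) (r : Fin n → ℕ)
    (S : Finset (Fin m → Fin n → ℕ)) (hS : ∀ s, s ∈ S ↔ ∑ k, s k = r) :
    ∑ s ∈ S, ∏ k, Apoly (s k) = (Apoly r).comp (C (m : ℚ) * X) := by
  simpa [Apoly_eq_raneyPoly] using
    Apoly_convolution_general (fun i : Fin n => (i : ℚ) + 1) (fun _ : Fin m => X) r S hS
end

section
/- Let n, m, j be natural numbers with 1 ≤ m ≤ j, m < n, and j < n. Then, as integers, Σ_{k=1}^{m} (−1)^{k+1} · k · C(m, k) · C(n − k − 1, j − 1) = m · C(n − m − 1, n − j − 1), where C(a, b) denotes the binomial coefficient. -/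
/-!
Absorbing the factor `k` through `k C(m, k) = m C(m - 1, k - 1)` leaves `m` times an alternating
sum weighted by row `m - 1` of Pascal's triangle. That sum is the `(m - 1)`-st forward difference
of `x ↦ C(x, j - 1)` at `x = n - m - 1`. For `m ≤ j` it equals `C(n - m - 1, j - m)` by Pascal's
rule, hence `C(n - m - 1, n - j - 1)` by symmetry; for `j < m` the degree is exceeded and both
sides vanish.
-/

open Finset fwdDiff

lemma fwdDiff_iter_eq_sum_shift_reflect {M G : Type*} [AddCommMonoid M] [AddCommGroup G]
    (h : M) (f : M → G) (n : ℕ) (y : M) :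
    (Δ_[h])^[n] f y =
      ∑ k ∈ range (n + 1), ((-1 : ℤ) ^ k * n.choose k) • f (y + (n - k) • h) := by
  rw [fwdDiff_iter_eq_sum_shift, ← sum_range_reflect]
  refine sum_congr rfl fun k hk ↦ ?_
  have hkn : k ≤ n := mem_range_succ_iff.mp hk
  rw [Nat.add_sub_cancel, Nat.sub_sub_self hkn, Nat.choose_symm hkn]

lemma fwdDiff_iter_choose_eq_zero_of_lt {c k : ℕ} (hck : c < k) :
    (Δ_[1])^[k] (fun x ↦ x.choose c : ℕ → ℤ) = 0 := by
  obtain ⟨d, rfl⟩ := Nat.exists_eq_add_of_lt hck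
  have h_top : (Δ_[1])^[c] (fun x ↦ x.choose c : ℕ → ℤ) = fun _ ↦ 1 := by
    simpa using fwdDiff_iter_choose 0 c
  rw [add_assoc, add_comm, Function.iterate_add_apply, h_top, Function.iterate_succ_apply,
    fwdDiff_const]
  exact Function.iterate_fixed (fwdDiff_const 1 0) d

lemma fwdDiff_iter_choose_apply {a c k : ℕ} (hc : c ≤ a + k) :
    (Δ_[1])^[k] (fun x ↦ x.choose c : ℕ → ℤ) a = a.choose (a + k - c) := by
  rcases lt_or_ge c k with hck | hkc
  · rw [fwdDiff_iter_choose_eq_zero_of_lt hck, Nat.choose_eq_zero_of_lt (by lia)]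
    simp
  · obtain ⟨d, rfl⟩ := Nat.exists_eq_add_of_le hkc
    rw [fwdDiff_iter_choose, show a + k - (k + d) = a - d by lia, Nat.choose_symm (by lia)]

lemma sum_range_neg_one_pow_mul_choose_mul_choose_sub {N M c : ℕ} (hM : M ≤ N) (hc : c ≤ N) :
    ∑ i ∈ range (M + 1), (-1 : ℤ) ^ i * M.choose i * (N - i).choose c =
      (N - M).choose (N - c) := by
  obtain ⟨a, rfl⟩ := Nat.exists_eq_add_of_le' hM
  rw [Nat.add_sub_cancel, ← fwdDiff_iter_choose_apply hc, fwdDiff_iter_eq_sum_shift_reflect]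
  refine sum_congr rfl fun i hi ↦ ?_
  rw [smul_eq_mul, smul_eq_mul, mul_one, Nat.add_sub_assoc (mem_range_succ_iff.mp hi)]

lemma sum_Icc_mul_choose_nsmul {A : Type*} [AddCommMonoid A] (f : ℕ → A) (m : ℕ) :
    ∑ k ∈ Icc 1 (m + 1), (k * (m + 1).choose k) • f k =
      (m + 1) • ∑ i ∈ range (m + 1), m.choose i • f (i + 1) := by
  rw [← Ico_add_one_right_eq_Icc, sum_Ico_eq_sum_range, Nat.add_sub_cancel, smul_sum]
  refine sum_congr rfl fun i _ ↦ ?_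
  rw [add_comm 1 i, smul_smul, Nat.add_one_mul_choose_eq, mul_comm]

theorem binomial_identity_general (n m j : ℕ) (hj : 1 ≤ j) (hmn : m < n) (hjn : j < n) :
    ∑ k ∈ Icc 1 m,
        (-1 : ℤ) ^ (k + 1) * (k : ℤ) * (m.choose k : ℤ) * ((n - k - 1).choose (j - 1) : ℤ) =
      (m : ℤ) * ((n - m - 1).choose (n - j - 1) : ℤ) := by
  obtain _ | M := m
  · simp
  calc
    _ = ∑ k ∈ Icc 1 (M + 1),
          (k * (M + 1).choose k) • ((-1 : ℤ) ^ (k + 1) * (n - k - 1).choose (j - 1)) :=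
      sum_congr rfl fun k _ ↦ by rw [nsmul_eq_mul]; push_cast; ring
    _ = (M + 1) • ∑ i ∈ range (M + 1),
          M.choose i • ((-1 : ℤ) ^ (i + 1 + 1) * (n - (i + 1) - 1).choose (j - 1)) :=
      sum_Icc_mul_choose_nsmul _ M
    _ = (M + 1 : ℕ) * ∑ i ∈ range (M + 1),
          (-1 : ℤ) ^ i * M.choose i * (n - 2 - i).choose (j - 1) := by
      rw [nsmul_eq_mul]
      congr! 2 with i
      rw [nsmul_eq_mul, show n - (i + 1) - 1 = n - 2 - i by lia]
      ring
    _ = (M + 1 : ℕ) * (n - (M + 1) - 1).choose (n - j - 1) := by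
      rw [sum_range_neg_one_pow_mul_choose_mul_choose_sub (by lia) (by lia),
        show n - 2 - M = n - (M + 1) - 1 by lia, show n - 2 - (j - 1) = n - j - 1 by lia]

/-- The binomial identity
`Σ_{k=1}^{m} (−1)^{k+1} k C(m,k) C(n−k−1, j−1) = m C(n−m−1, n−j−1)` for `1 ≤ m ≤ j`,
`m < n`, `j < n`. -/
theorem binomial_identity (n m j : ℕ) (hm : 1 ≤ m) (hmj : m ≤ j) (hmn : m < n)
    (hjn : j < n) :
    ∑ k ∈ Finset.Icc 1 m,
        (-1 : ℤ) ^ (k + 1) * (k : ℤ) * (m.choose k : ℤ) * ((n - k - 1).choose (j - 1) : ℤ) =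
      (m : ℤ) * ((n - m - 1).choose (n - j - 1) : ℤ) :=
  binomial_identity_general n m j (hm.trans hmj) hmn hjn
end

section
/- Let n, m ≥ 1, let v = (1, 2, …, n), and let r = (r_1, …, r_n) ∈ ℕ^n satisfy r·v = n, |r| < n, m ≤ |r|, and m < n. Then, as rational numbers, Σ_{k=1}^{m} (−1)^{k} · C(m, k) · A_r(−k) = m · (n − m − 1)! · (|r| − 1)! / ((n − |r| − 1)! · (|r| − m)! · r!), where A_r(−k) denotes the evaluation of the polynomial A_r(x) at x = −k and C(m, k) is a binomial coefficient. -/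
open Polynomial

/-!
At `x = -k` with `k < r·v` the factors of `A_r(x)` other than `x` descend in unit steps from the
natural number `r·v - 1 - k`, so `A_r(-k) = -k · (|r| - 1)! · C(r·v - 1 - k, |r| - 1) / r!`.
Absorbing the factor `k` into `C(m, k)` leaves an `(m - 1)`-st iterated finite difference of a
binomial coefficient, and by Pascal's rule each difference lowers the bottom index by one.
-/

section AlternatingSums

theorem sum_range_neg_one_pow_mul_choose_mul_choose {R : Type*} [Ring R] (a b M : ℕ) :
    ∑ i ∈ Finset.range (M + 1), (-1 : R) ^ i * M.choose i * (a + (M - i)).choose (M + b) =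
      a.choose b := by
  have iterated_diff : ∑ k ∈ Finset.range (M + 1),
      (-1 : ℤ) ^ (M - k) * M.choose k * (a + k).choose (M + b) = a.choose b := by
    simpa [fwdDiff_iter_eq_sum_shift] using congrFun (fwdDiff_iter_choose b M) a
  have reflected : ∑ i ∈ Finset.range (M + 1),
      (-1 : ℤ) ^ i * M.choose i * (a + (M - i)).choose (M + b) = a.choose b := by
    rw [← iterated_diff, ← Finset.sum_range_reflect]
    refine Finset.sum_congr rfl fun k hk ↦ ?_
    have hkM : k ≤ M := Finset.mem_range_succ_iff.mp hk
    rw [Nat.add_sub_cancel, Nat.choose_symm hkM, Nat.sub_sub_self hkM]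
  exact_mod_cast congrArg (Int.cast : ℤ → R) reflected

variable {R : Type*} [CommRing R]

theorem sum_Icc_neg_one_pow_mul_choose_mul_neg (M : ℕ) (f : ℕ → R) :
    ∑ k ∈ Finset.Icc 1 (M + 1), (-1 : R) ^ k * (M + 1).choose k * (-k * f k) =
      (M + 1) * ∑ i ∈ Finset.range (M + 1), (-1 : R) ^ i * M.choose i * f (i + 1) := by
  rw [Finset.range_eq_Ico, ← Finset.Ico_add_one_right_eq_Icc, Finset.mul_sum,
    ← Finset.sum_Ico_add' _ 0 (M + 1) 1]
  refine Finset.sum_congr rfl fun i _ ↦ ?_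
  have absorption : (M + 1 : R) * M.choose i = (M + 1).choose (i + 1) * (i + 1) := by
    exact_mod_cast congrArg (Nat.cast : ℕ → R) (Nat.add_one_mul_choose_eq M i)
  push_cast
  linear_combination (-(-1) ^ i * f (i + 1)) * absorption

theorem sum_Icc_neg_one_pow_mul_choose_mul_neg_mul_choose {m s N : ℕ} (hms : m ≤ s)
    (hmN : m < N) :
    ∑ k ∈ Finset.Icc 1 m, (-1 : R) ^ k * m.choose k * (-k * (N - 1 - k).choose (s - 1)) =
      m * (N - 1 - m).choose (s - m) := by
  rcases m with _ | M
  · simp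
  rw [sum_Icc_neg_one_pow_mul_choose_mul_neg M fun k ↦ ((N - 1 - k).choose (s - 1) : R),
    ← sum_range_neg_one_pow_mul_choose_mul_choose _ _ M, Nat.cast_succ]
  congr 1
  refine Finset.sum_congr rfl fun i hi ↦ ?_
  have hiM : i ≤ M := Finset.mem_range_succ_iff.mp hi
  congr 3 <;> lia

end AlternatingSums

section Apoly

variable {n : ℕ} {r : Fin n → ℕ}

theorem Apoly_eval_of_ne_zero (hr : r ≠ 0) (x : ℚ) :
    (Apoly r).eval x =
      x * (descPochhammer ℚ ((∑ i, r i) - 1)).eval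
        (x + (∑ i, (i.1 + 1) * r i : ℕ) - 1) / (∏ i, (r i).factorial : ℕ) := by
  rw [Apoly, if_neg hr, descPochhammer_eval_eq_prod_range]
  simp only [eval_mul, eval_C, eval_X, eval_prod, eval_add, add_sub_assoc]
  ring

theorem Apoly_eval_neg_natCast {k N : ℕ} (hN : ∑ i, (i.1 + 1) * r i = N) (hk : k < N) :
    (Apoly r).eval (-(k : ℚ)) =
      -k * (N - 1 - k).choose ((∑ i, r i) - 1) *
        (((∑ i, r i) - 1).factorial / (∏ i, (r i).factorial : ℕ)) := by
  have r_ne_zero : r ≠ 0 := by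
    rintro rfl
    exact hk.ne_zero (by simpa using hN.symm)
  have argument_eq : -(k : ℚ) + N - 1 = (N - 1 - k : ℕ) := by
    rw [Nat.sub_sub, Nat.cast_sub (by lia)]
    push_cast
    ring
  rw [Apoly_eval_of_ne_zero r_ne_zero, hN, argument_eq, descPochhammer_eval_eq_descFactorial,
    Nat.descFactorial_eq_factorial_mul_choose, Nat.cast_mul]
  ring

theorem Apoly_alternating_sum_general {m N : ℕ} (hN : ∑ i, (i.1 + 1) * r i = N)
    (hr : ∑ i, r i < N) (hmr : m ≤ ∑ i, r i) :
    ∑ k ∈ Finset.Icc 1 m, (-1 : ℚ) ^ k * (m.choose k : ℚ) * (Apoly r).eval (-(k : ℚ)) =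
      ((m : ℚ) * ((N - m - 1).factorial : ℚ) * (((∑ i, r i) - 1).factorial : ℚ)) /
        (((N - (∑ i, r i) - 1).factorial : ℚ) * ((((∑ i, r i) - m).factorial : ℚ)) *
          ((∏ i, (r i).factorial : ℕ) : ℚ)) := by
  set s := ∑ i, r i
  set c : ℚ := (s - 1).factorial / (∏ i, (r i).factorial : ℕ) with hc
  calc ∑ k ∈ Finset.Icc 1 m, (-1 : ℚ) ^ k * m.choose k * (Apoly r).eval (-(k : ℚ))
      = ∑ k ∈ Finset.Icc 1 m,
          (-1 : ℚ) ^ k * m.choose k * (-k * (N - 1 - k).choose (s - 1)) * c := by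
        refine Finset.sum_congr rfl fun k hk ↦ ?_
        have hkN : k < N := (Finset.mem_Icc.mp hk).2.trans_lt (hmr.trans_lt hr)
        rw [Apoly_eval_neg_natCast hN hkN]
        exact (mul_assoc _ _ _).symm
    _ = m * (N - 1 - m).choose (s - m) * c := by
        rw [← Finset.sum_mul,
          sum_Icc_neg_one_pow_mul_choose_mul_neg_mul_choose hmr (hmr.trans_lt hr)]
    _ = _ := by
        rw [Nat.cast_choose ℚ (by lia), show N - 1 - m - (s - m) = N - s - 1 by lia,
          Nat.sub_right_comm N 1 m, hc]
        ring

end Apoly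

/-- `Σ_{k=1}^{m} (−1)^k C(m,k) A_r(−k) = m (n−m−1)! (|r|−1)! / ((n−|r|−1)! (|r|−m)! r!)`. -/
theorem Apoly_alternating_sum (n m : ℕ) (hn : 1 ≤ n) (hm : 1 ≤ m) (r : Fin n → ℕ)
    (hrv : ∑ i, (i.1 + 1) * r i = n) (hr : ∑ i, r i < n)
    (hmr : m ≤ ∑ i, r i) (hmn : m < n) :
    ∑ k ∈ Finset.Icc 1 m, (-1 : ℚ) ^ k * (m.choose k : ℚ) * (Apoly r).eval (-(k : ℚ)) =
      ((m : ℚ) * ((n - m - 1).factorial : ℚ) * (((∑ i, r i) - 1).factorial : ℚ)) /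
        (((n - (∑ i, r i) - 1).factorial : ℚ) * ((((∑ i, r i) - m).factorial : ℚ)) *
          ((∏ i, (r i).factorial : ℕ) : ℚ)) :=
  Apoly_alternating_sum_general hrv hr hmr
end

section
/- Let n > 1 and let r = (r_1, …, r_n) ∈ ℕ^n satisfy r_1 + 2r_2 + ⋯ + n·r_n = n and |r| := r_1 + ⋯ + r_n < n. For a set partition π of [n], define the word ψ(π) = w_1 w_2 ⋯ w_{n−1} by: w_i is the letter j if i is the minimal element of a block of π of size j, and w_i is the letter 0 otherwise. Then π ↦ ψ(π) is a bijection from the set of connected noncrossing set partitions of [n] of type r onto ℬ(r), the set of words of length n − 1 lying in ℬ with exactly n − |r| − 1 occurrences of letter 0 and exactly r_i occurrences of letter i for 1 ≤ i ≤ n. -/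
/-- A set partition of `[n] = {1, …, n}`, encoded as a `Finpartition` of `Finset.Icc 1 n`. -/
abbrev SetPartitionOn (n : ℕ) := Finpartition (Finset.Icc 1 n)

/-- `π` has type `r = (r_1, …, r_n)` if for each `i` the number of blocks of size `i` is `r_i`. -/
def HasType {n : ℕ} (π : SetPartitionOn n) (r : Fin n → ℕ) : Prop :=
  ∀ i : Fin n, (π.parts.filter (fun B => B.card = i.1 + 1)).card = r i

/-- `π` is noncrossing: there are no `a < b < c < d` with `a, c` in one block and
`b, d` in a different block. -/
def Noncrossing {n : ℕ} (π : SetPartitionOn n) : Prop :=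
  ¬ ∃ a b c d : ℕ, a < b ∧ b < c ∧ c < d ∧
      ∃ B ∈ π.parts, ∃ B' ∈ π.parts, B ≠ B' ∧ a ∈ B ∧ c ∈ B ∧ b ∈ B' ∧ d ∈ B'

/-- `(i, j)` is an arc of `π`: `i < j` lie in a common block with no element of that
block strictly between them. -/
def IsArc {n : ℕ} (π : SetPartitionOn n) (i j : ℕ) : Prop :=
  i < j ∧ ∃ B ∈ π.parts, i ∈ B ∧ j ∈ B ∧ ∀ k ∈ B, ¬ (i < k ∧ k < j)

/-- `π` is nonnesting: there are no arcs `(a, d)` and `(b, c)` with `a < b < c < d`. -/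
def Nonnesting {n : ℕ} (π : SetPartitionOn n) : Prop :=
  ¬ ∃ a b c d : ℕ, a < b ∧ b < c ∧ c < d ∧ IsArc π a d ∧ IsArc π b c

/-- `i ∈ {1, …, n-1}` is a cut of `π` if no block contains both an element `≤ i` and an
element `> i`. -/
def IsCut {n : ℕ} (π : SetPartitionOn n) (i : ℕ) : Prop :=
  1 ≤ i ∧ i ≤ n - 1 ∧ ∀ B ∈ π.parts, (∀ x ∈ B, x ≤ i) ∨ (∀ x ∈ B, i < x)

/-- `π` is connected if it has no cuts. -/
def Connected {n : ℕ} (π : SetPartitionOn n) : Prop := ∀ i, ¬ IsCut π i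

/-- The number of cuts of `π`; `π` has exactly `m` connected components iff this is `m - 1`. -/
noncomputable def cutCount {n : ℕ} (π : SetPartitionOn n) : ℕ := Set.ncard {i : ℕ | IsCut π i}

/-- The weight of a word: the sum of `(a - 1)` over its letters, as an integer. -/
def wt (w : List ℕ) : ℤ := (w.map (fun a => (a : ℤ) - 1)).sum

/-- The set `ℬ` of words of weight 1 all of whose nonempty prefixes have positive weight. -/
def Bset : Set (List ℕ) :=
  {w | wt w = 1 ∧ ∀ j, 0 < j → j ≤ w.length → 0 < wt (w.take j)}

/-- The word `ψ(π) = w_1 ⋯ w_{n-1}`: `w_i` is the letter `j` if `i` is the minimal element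
of a block of `π` of size `j`, and is the letter `0` otherwise.  (The `i`-th letter is
computed as the sum of `|B|` over the (at most one) block `B` whose minimum is `i`.) -/
def psi (n : ℕ) (π : SetPartitionOn n) : List ℕ :=
  (List.range (n - 1)).map (fun k =>
    (π.parts.filter (fun B => (k + 1) ∈ B ∧ ∀ x ∈ B, k + 1 ≤ x)).sum Finset.card)

/-!
Append a letter `0` to `ψ(π)` and let the height at `t` be the total weight of the letters before
position `t`. This height is the number of elements `≥ t` whose block started before `t`, so the
cuts of `π` are exactly the returns of the height to `0`, which is why connected partitions
correspond to words in `ℬ`. If `π` is noncrossing, blocks close in the order of a stack, and the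
minimum of the block of a non-minimal element `t` is the last position at which the height is less
than at `t`; hence `π` is determined by `ψ(π)`. Conversely, for a word in `ℬ` this rule defines a
noncrossing partition. The elements of a block sit at distinct heights, which bounds the size of the
block with minimum `m` by the `m`-th letter; since both the block sizes and the letters add up
to `n`, all these bounds are equalities.
-/

open Finset

section BlockMin

variable {s : Finset ℕ} (π : Finpartition s) {x y i : ℕ}

/-- The minimum of the block of `π` containing `x`; it is `0` when `x ∉ s`. -/
noncomputable def blockMin (x : ℕ) : ℕ := sInf (π.part x : Set ℕ)

/-- The size of the block of `π` with minimum `i`, and `0` if `i` is not the minimum of a block;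
these sizes are the letters of `ψ(π)`. -/
noncomputable def blockSize (i : ℕ) : ℕ := #{y ∈ s | blockMin π y = i}

/-- The elements `≥ t` whose block contains an element `< t`; for partitions of `[n]` their number
is the height at `t` of the word of block sizes. -/
noncomputable def pending (t : ℕ) : Finset ℕ := {y ∈ s | t ≤ y ∧ blockMin π y < t}

lemma isLeast_blockMin (hx : x ∈ s) : IsLeast (π.part x : Set ℕ) (blockMin π x) :=
  isLeast_csInf ⟨x, π.mem_part_self.2 hx⟩

lemma blockMin_le (hx : x ∈ s) : blockMin π x ≤ x :=
  (isLeast_blockMin π hx).2 (π.mem_part_self.2 hx)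

lemma blockMin_mem (hx : x ∈ s) : blockMin π x ∈ s :=
  π.part_subset x (isLeast_blockMin π hx).1

variable {π}

lemma part_eq_part_iff_blockMin_eq (hx : x ∈ s) (hy : y ∈ s) :
    π.part x = π.part y ↔ blockMin π x = blockMin π y := by
  refine ⟨fun h => by rw [blockMin, h, blockMin], fun h => ?_⟩
  exact π.eq_of_mem_parts (π.part_mem.2 hx) (π.part_mem.2 hy)
    (isLeast_blockMin π hx).1 (h ▸ (isLeast_blockMin π hy).1)

lemma mem_part_iff_blockMin_eq (hx : x ∈ s) (hy : y ∈ s) :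
    x ∈ π.part y ↔ blockMin π x = blockMin π y := by
  rw [π.mem_part_iff_part_eq_part hx hy, part_eq_part_iff_blockMin_eq hx hy]

lemma blockMin_blockMin (hx : x ∈ s) : blockMin π (blockMin π x) = blockMin π x :=
  (mem_part_iff_blockMin_eq (blockMin_mem π hx) hx).1 (isLeast_blockMin π hx).1

lemma blockMin_eq_iff_isLeast {B : Finset ℕ} (hB : B ∈ π.parts) (hx : x ∈ B) :
    blockMin π x = i ↔ IsLeast (B : Set ℕ) i := by
  have h := isLeast_blockMin π (π.subset hB hx)
  rw [π.part_eq_of_mem hB hx] at h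
  exact ⟨fun hi => hi ▸ h, h.unique⟩

lemma part_eq_filter_blockMin_eq (hx : x ∈ s) :
    π.part x = {y ∈ s | blockMin π y = blockMin π x} := by
  ext y
  rw [mem_filter]
  exact ⟨fun h => ⟨π.part_subset x h, (mem_part_iff_blockMin_eq (π.part_subset x h) hx).1 h⟩,
    fun h => (mem_part_iff_blockMin_eq h.1 hx).2 h.2⟩

lemma finpartition_ext_blockMin {π' : Finpartition s}
    (h : ∀ x ∈ s, blockMin π x = blockMin π' x) : π = π' := by
  have hpart : ∀ x ∈ s, π.part x = π'.part x := fun x hx => by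
    rw [part_eq_filter_blockMin_eq hx, part_eq_filter_blockMin_eq hx, h x hx]
    exact filter_congr fun y hy => by rw [h y hy]
  ext B
  refine ⟨fun hB => ?_, fun hB => ?_⟩
  · obtain ⟨x, hx⟩ := π.nonempty_of_mem_parts hB
    rw [← π.part_eq_of_mem hB hx, hpart x (π.subset hB hx)]
    exact π'.part_mem.2 (π.subset hB hx)
  · obtain ⟨x, hx⟩ := π'.nonempty_of_mem_parts hB
    rw [← π'.part_eq_of_mem hB hx, ← hpart x (π'.subset hB hx)]
    exact π.part_mem.2 (π'.subset hB hx)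

lemma exists_finpartition_blockMin_eq {M : ℕ → ℕ} (hmem : ∀ x ∈ s, M x ∈ s)
    (hle : ∀ x ∈ s, M x ≤ x) (hidem : ∀ x ∈ s, M (M x) = M x) :
    ∃ π : Finpartition s, ∀ x ∈ s, blockMin π x = M x := by
  classical
  refine ⟨Finpartition.ofSetSetoid (Setoid.ker M) s, fun x hx => ?_⟩
  refine (isLeast_blockMin _ hx).unique ⟨?_, fun y hy => ?_⟩
  · exact (Finpartition.mem_part_ofSetSetoid_iff_rel s).2 ⟨hx, hmem x hx, (hidem x hx).symm⟩
  · obtain ⟨-, hys, hxy⟩ := (Finpartition.mem_part_ofSetSetoid_iff_rel s).1 hy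
    exact (show M x = M y from hxy) ▸ hle y hys

lemma blockSize_ne_zero_iff (hi : i ∈ s) : blockSize π i ≠ 0 ↔ blockMin π i = i := by
  rw [blockSize, card_ne_zero]
  refine ⟨?_, fun h => ⟨i, mem_filter.2 ⟨hi, h⟩⟩⟩
  rintro ⟨y, hy⟩
  obtain ⟨hys, rfl⟩ := mem_filter.1 hy
  exact blockMin_blockMin hys

lemma blockSize_eq_zero_of_notMem (hi : i ∉ s) : blockSize π i = 0 :=
  card_eq_zero.2 <| filter_eq_empty_iff.2 fun _ hy h => hi (h ▸ blockMin_mem π hy)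

lemma card_part_of_blockMin_eq_self (hi : i ∈ s) (h : blockMin π i = i) :
    #(π.part i) = blockSize π i := by
  rw [part_eq_filter_blockMin_eq hi, h, blockSize]

lemma sum_card_parts_isLeast (i : ℕ) :
    ∑ B ∈ π.parts with i ∈ B ∧ ∀ x ∈ B, i ≤ x, #B = blockSize π i := by
  have hdisj : ((π.parts.filter fun B => i ∈ B ∧ ∀ x ∈ B, i ≤ x : Finset (Finset ℕ)) :
      Set (Finset ℕ)).PairwiseDisjoint id := π.disjoint.subset (filter_subset _ _)
  refine (card_biUnion hdisj).symm.trans (congrArg card ?_)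
  ext y
  simp only [mem_biUnion, mem_filter, id]
  constructor
  · rintro ⟨B, ⟨hB, hi⟩, hy⟩
    exact ⟨π.subset hB hy, (blockMin_eq_iff_isLeast hB hy).2 hi⟩
  · rintro ⟨hy, hi⟩
    have hyB := π.mem_part_self.2 hy
    have hB := π.part_mem.2 hy
    exact ⟨_, ⟨hB, (blockMin_eq_iff_isLeast hB hyB).1 hi⟩, hyB⟩

lemma card_parts_card_eq {c : ℕ} (hc : c ≠ 0) :
    #{B ∈ π.parts | #B = c} = #{i ∈ s | blockSize π i = c} := by
  have hmin : ∀ i ∈ ({i ∈ s | blockSize π i = c} : Finset ℕ), i ∈ s ∧ blockMin π i = i := by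
    intro i hi
    obtain ⟨his, hic⟩ := mem_filter.1 hi
    exact ⟨his, (blockSize_ne_zero_iff his).1 (hic ▸ hc)⟩
  symm
  refine card_nbij π.part (fun i hi => ?_) (fun i hi j hj hij => ?_) (fun B hB => ?_)
  · obtain ⟨his, h⟩ := hmin i hi
    rw [mem_coe, mem_filter, π.part_mem, card_part_of_blockMin_eq_self his h]
    exact mem_filter.1 hi
  · obtain ⟨his, h⟩ := hmin i hi
    obtain ⟨hjs, h'⟩ := hmin j hj
    rw [← h, ← h']
    exact (part_eq_part_iff_blockMin_eq his hjs).1 hij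
  · obtain ⟨hBπ, hBc⟩ := mem_filter.1 hB
    obtain ⟨x, hx⟩ := π.nonempty_of_mem_parts hBπ
    have hxs := π.subset hBπ hx
    have hm := blockMin_mem π hxs
    have hpart : π.part (blockMin π x) = B := by
      rw [(part_eq_part_iff_blockMin_eq hm hxs).2 (blockMin_blockMin hxs),
        π.part_eq_of_mem hBπ hx]
    refine ⟨_, mem_filter.2 ⟨hm, ?_⟩, hpart⟩
    rw [← card_part_of_blockMin_eq_self hm (blockMin_blockMin hxs), hpart, hBc]

end BlockMin

section Height

variable {q : ℕ → ℕ} {k m n s t : ℕ}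

/-- The total weight of the letters `q 1, …, q (t - 1)` strictly before position `t`;
the value `q 0` is ignored. -/
def height (q : ℕ → ℕ) (t : ℕ) : ℤ := ∑ i ∈ Ico 1 t, ((q i : ℤ) - 1)

/-- The position paired with `t` when the letters `q 1, q 2, …` are read as a bracketing: `t` itself
if `q t ≠ 0`, and otherwise the last position before `t` of height less than that of `t`. -/
def opener (q : ℕ → ℕ) (t : ℕ) : ℕ :=
  if q t ≠ 0 then t else Nat.findGreatest (fun m => height q m < height q t) t

lemma height_zero : height q 0 = 0 := rfl

lemma height_one : height q 1 = 0 := rfl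

lemma height_succ (ht : 1 ≤ t) : height q (t + 1) = height q t + q t - 1 := by
  rw [height, sum_Ico_succ_top ht, height, add_sub_assoc]

lemma opener_of_ne_zero (h : q t ≠ 0) : opener q t = t := if_pos h

lemma opener_of_eq_zero (h : q t = 0) :
    opener q t = Nat.findGreatest (fun m => height q m < height q t) t := if_neg (not_not.2 h)

lemma opener_le : opener q t ≤ t := by
  rw [opener]
  split_ifs
  exacts [le_rfl, Nat.findGreatest_le t]

lemma height_le_of_opener_lt (hk : opener q t < k) (hkt : k ≤ t) : height q t ≤ height q k := by
  by_cases hq : q t = 0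
  · rw [opener_of_eq_zero hq] at hk
    exact not_lt.1 (Nat.findGreatest_is_greatest hk hkt)
  · rw [opener_of_ne_zero hq] at hk
    omega

lemma height_opener_lt (hq : q t = 0) (ht : 0 < height q t) :
    height q (opener q t) < height q t := by
  rw [opener_of_eq_zero hq]
  exact Nat.findGreatest_spec (P := fun m => height q m < height q t) t.zero_le
    (by rwa [height_zero])

lemma one_le_opener (ht : 1 ≤ t) (hpos : q t = 0 → 0 < height q t) : 1 ≤ opener q t := by
  by_contra! h0
  by_cases hq : q t = 0
  · have := hpos hq
    have := height_le_of_opener_lt h0 ht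
    rw [height_one] at this
    omega
  · rw [opener_of_ne_zero hq] at h0
    omega

lemma opener_lt_self_iff (hpos : q t = 0 → 0 < height q t) : opener q t < t ↔ q t = 0 := by
  refine ⟨fun h => by_contra fun hq => h.ne (opener_of_ne_zero hq), fun hq => ?_⟩
  refine opener_le.lt_of_ne fun h => ?_
  simpa [h] using height_opener_lt hq (hpos hq)

lemma opener_eq_of_forall (hq : q t = 0) (hmt : m < t) (hm : height q m < height q t)
    (hmax : ∀ k, m < k → k ≤ t → height q t ≤ height q k) : opener q t = m := by
  rw [opener_of_eq_zero hq, Nat.findGreatest_eq_iff]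
  exact ⟨hmt.le, fun _ => hm, fun k hk hkt => not_lt.2 (hmax k hk hkt)⟩

lemma opener_opener (ht : 1 ≤ t) (hpos : q t = 0 → 0 < height q t) :
    opener q (opener q t) = opener q t := by
  by_cases hq : q t = 0
  · refine opener_of_ne_zero fun h0 => ?_
    have hlt := height_opener_lt hq (hpos hq)
    have hle := height_le_of_opener_lt (Nat.lt_add_one _) ((opener_lt_self_iff hpos).2 hq)
    have hsucc := height_succ (q := q) (one_le_opener ht hpos)
    rw [hsucc, h0] at hle
    omega
  · rw [opener_of_ne_zero hq, opener_of_ne_zero hq]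

lemma opener_le_opener (hpos : q t = 0 → 0 < height q t) (hst : s < t) (hts : opener q t < s) :
    opener q t ≤ opener q s := by
  by_contra! hlt
  have hqt := (opener_lt_self_iff hpos).1 (hts.trans hst)
  have hs_le := height_le_of_opener_lt hlt hts.le
  have ht_lt := height_opener_lt hqt (hpos hqt)
  have ht_le := height_le_of_opener_lt hts hst.le
  omega

lemma height_ne_of_opener_eq (hs : 1 ≤ s) (hst : s < t) (hpos : q t = 0 → 0 < height q t)
    (h : opener q s = opener q t) : height q s ≠ height q t := by
  have hts : opener q t ≤ s := h ▸ opener_le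
  by_cases hq : q s = 0
  · have hle := height_le_of_opener_lt (Nat.lt_add_one_of_le hts) hst
    rw [height_succ hs, hq] at hle
    omega
  · have hqt := (opener_lt_self_iff hpos).1 (hts.trans_lt hst)
    rw [← opener_of_ne_zero hq, h]
    exact (height_opener_lt hqt (hpos hqt)).ne

lemma height_mem_Icc_opener (ht : 1 ≤ t) (hpos : q t = 0 → 0 < height q t) :
    height q t ∈ Icc (height q (opener q t)) (height q (opener q t + 1)) := by
  rw [mem_Icc]
  by_cases hq : q t = 0
  · exact ⟨(height_opener_lt hq (hpos hq)).le,
      height_le_of_opener_lt (Nat.lt_add_one _) ((opener_lt_self_iff hpos).2 hq)⟩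
  · rw [opener_of_ne_zero hq, height_succ ht]
    omega

-- The fiber occurs at distinct heights between `height q m` and `height q (m + 1)`, which leaves
-- room for `q m` positions.
lemma card_filter_opener_le (hm : 1 ≤ m) (hpos : ∀ t ∈ Icc 1 n, q t = 0 → 0 < height q t) :
    #{t ∈ Icc 1 n | opener q t = m} ≤ q m := by
  have hcard : #(Icc (height q m) (height q (m + 1))) = q m := by
    rw [Int.card_Icc, height_succ hm]
    omega
  rw [← hcard]
  refine card_le_card_of_injOn (height q) (fun t ht => ?_) (fun s hs t ht hst => ?_)
  · obtain ⟨htn, rfl⟩ := mem_filter.1 ht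
    exact height_mem_Icc_opener (mem_Icc.1 htn).1 (hpos t htn)
  · obtain ⟨hsn, hsm⟩ := mem_filter.1 hs
    obtain ⟨htn, htm⟩ := mem_filter.1 ht
    by_contra hne
    rcases Nat.lt_or_gt_of_ne hne with hlt | hlt
    · exact height_ne_of_opener_eq (mem_Icc.1 hsn).1 hlt (hpos t htn) (hsm.trans htm.symm) hst
    · exact height_ne_of_opener_eq (mem_Icc.1 htn).1 hlt (hpos s hsn) (htm.trans hsm.symm) hst.symm

lemma opener_mem_Icc (ht : t ∈ Icc 1 n) (hpos : q t = 0 → 0 < height q t) :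
    opener q t ∈ Icc 1 n :=
  mem_Icc.2 ⟨one_le_opener (mem_Icc.1 ht).1 hpos, opener_le.trans (mem_Icc.1 ht).2⟩

lemma card_filter_opener_eq (hpos : ∀ t ∈ Icc 1 n, q t = 0 → 0 < height q t)
    (hend : height q (n + 1) = 0) (hm : m ∈ Icc 1 n) :
    #{t ∈ Icc 1 n | opener q t = m} = q m := by
  have hfibers : ∑ m ∈ Icc 1 n, #{t ∈ Icc 1 n | opener q t = m} = n := by
    rw [← card_eq_sum_card_fiberwise fun t ht => opener_mem_Icc ht (hpos t ht), Nat.card_Icc,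
      Nat.add_sub_cancel]
  have hletters : ∑ m ∈ Icc 1 n, q m = n := by
    have h : height q (n + 1) = (∑ m ∈ Icc 1 n, q m : ℕ) - n := by
      simp [height, Ico_add_one_right_eq_Icc]
    omega
  exact (sum_eq_sum_iff_of_le fun m hm => card_filter_opener_le (mem_Icc.1 hm).1 hpos).1
    (hfibers.trans hletters.symm) m hm

end Height

section SetPartition

variable {n : ℕ} {π : SetPartitionOn n} {q : ℕ → ℕ} {i k t : ℕ}

lemma card_pending (ht : t ≤ n + 1) : (#(pending π t) : ℤ) = height (blockSize π) t := by
  rcases t.eq_zero_or_pos with rfl | -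
  · simp [pending, height]
  have hbelow : ∑ i ∈ Ico 1 t, blockSize π i = #{y ∈ Icc 1 n | blockMin π y < t} := by
    rw [card_eq_sum_card_fiberwise (f := blockMin π) (t := Ico 1 t) fun y hy => ?_]
    · refine sum_congr rfl fun i hi => congrArg card ?_
      rw [filter_filter]
      exact filter_congr fun y _ => ⟨fun h => ⟨h ▸ (mem_Ico.1 hi).2, h⟩, And.right⟩
    · obtain ⟨hyn, hyt⟩ := mem_filter.1 hy
      exact mem_Ico.2 ⟨(mem_Icc.1 (blockMin_mem π hyn)).1, hyt⟩
  have hsub : Ico 1 t ⊆ {y ∈ Icc 1 n | blockMin π y < t} := fun y hy => by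
    obtain ⟨hy1, hyt⟩ := mem_Ico.1 hy
    have hyn : y ∈ Icc 1 n := mem_Icc.2 ⟨hy1, by omega⟩
    exact mem_filter.2 ⟨hyn, (blockMin_le π hyn).trans_lt hyt⟩
  have hpending : pending π t = {y ∈ Icc 1 n | blockMin π y < t} \ Ico 1 t := by
    ext y
    simp only [pending, mem_filter, mem_sdiff, mem_Icc, mem_Ico]
    omega
  rw [hpending, cast_card_sdiff hsub, ← hbelow, Nat.card_Ico, height, sum_sub_distrib]
  simp

lemma height_blockSize_last : height (blockSize π) (n + 1) = 0 := by
  rw [← card_pending le_rfl, Nat.cast_eq_zero, card_eq_zero, pending, filter_eq_empty_iff]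
  intro y hy h
  have := (mem_Icc.1 hy).2
  omega

lemma noncrossing_iff_blockMin_le : Noncrossing π ↔
    ∀ x ∈ Icc 1 n, ∀ y ∈ Icc 1 n, x < y → blockMin π y < x → blockMin π y ≤ blockMin π x := by
  constructor
  · intro h x hx y hy hxy hyx
    by_contra! hlt
    refine h ⟨blockMin π x, blockMin π y, x, y, hlt, hyx, hxy, π.part x, π.part_mem.2 hx,
      π.part y, π.part_mem.2 hy, fun he => ?_, (isLeast_blockMin π hx).1, π.mem_part_self.2 hx,
      (isLeast_blockMin π hy).1, π.mem_part_self.2 hy⟩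
    exact hlt.ne ((part_eq_part_iff_blockMin_eq hx hy).1 he)
  · rintro h ⟨a, b, c, d, hab, hbc, hcd, B, hB, B', hB', hne, ha, hc, hb, hd⟩
    have hac := (blockMin_eq_iff_isLeast hB ha).2
      ((blockMin_eq_iff_isLeast hB hc).1 rfl)
    have hbd := (blockMin_eq_iff_isLeast hB' hb).2
      ((blockMin_eq_iff_isLeast hB' hd).1 rfl)
    have ha' := π.subset hB ha
    have hb' := π.subset hB' hb
    have hcb := h b hb' c (π.subset hB hc) hbc (by have := blockMin_le π ha'; omega)
    have hdc := h c (π.subset hB hc) d (π.subset hB' hd) hcd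
      (by have := blockMin_le π hb'; omega)
    refine hne ?_
    rw [← π.part_eq_of_mem hB ha, ← π.part_eq_of_mem hB' hb]
    exact (part_eq_part_iff_blockMin_eq ha' hb').2 (by omega)

lemma isCut_iff_pending_eq_empty : IsCut π i ↔ 1 ≤ i ∧ i ≤ n - 1 ∧ pending π (i + 1) = ∅ := by
  refine and_congr_right fun _ => and_congr_right fun _ => ?_
  rw [pending, filter_eq_empty_iff]
  constructor
  · rintro h y hy ⟨hiy, hyi⟩
    rcases h _ (π.part_mem.2 hy) with hle | hgt
    · have := hle y (π.mem_part_self.2 hy)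
      omega
    · have := hgt _ (isLeast_blockMin π hy).1
      omega
  · intro h B hB
    refine or_iff_not_imp_left.2 fun hle => ?_
    push Not at hle
    obtain ⟨y, hy, hiy⟩ := hle
    intro x hx
    have hyn := π.subset hB hy
    have hmin := ((blockMin_eq_iff_isLeast hB hy).1 rfl).2 hx
    have := h hyn
    omega

lemma connected_iff_height_pos : Connected π ↔
    ∀ i, 1 ≤ i → i ≤ n - 1 → 0 < height (blockSize π) (i + 1) := by
  refine forall_congr' fun i => ?_
  rw [isCut_iff_pending_eq_empty, not_and, not_and]
  refine imp_congr_right fun _ => imp_congr_right fun _ => ?_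
  rw [← card_pending (by omega), Nat.cast_pos, card_pos, nonempty_iff_ne_empty]

lemma pending_blockMin_ssubset_pending (hπ : Noncrossing π) (ht : t ∈ Icc 1 n)
    (hlt : blockMin π t < t) : pending π (blockMin π t) ⊂ pending π t := by
  rw [noncrossing_iff_blockMin_le] at hπ
  refine (ssubset_iff_of_subset fun y hy => ?_).2 ⟨t, ?_, ?_⟩
  · obtain ⟨hyn, hmy, hym⟩ := mem_filter.1 hy
    have hmm := blockMin_blockMin (π := π) ht
    have hne : blockMin π t ≠ y := by rintro rfl; omega
    have hnested := hπ y hyn t ht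
    exact mem_filter.2 ⟨hyn, by omega⟩
  · exact mem_filter.2 ⟨ht, le_rfl, hlt⟩
  · exact fun h => (mem_filter.1 h).2.2.false

lemma pending_subset_pending_of_blockMin_lt (hπ : Noncrossing π) (ht : t ∈ Icc 1 n)
    (hk : blockMin π t < k) (hkt : k ≤ t) : pending π t ⊆ pending π k := by
  intro y hy
  obtain ⟨hyn, hty, hyt⟩ := mem_filter.1 hy
  refine mem_filter.2 ⟨hyn, hkt.trans hty, ?_⟩
  rcases hty.eq_or_lt with rfl | hlt
  · exact hk
  · exact (noncrossing_iff_blockMin_le.1 hπ t ht y hyn hlt hyt).trans_lt hk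

lemma blockMin_eq_opener (hπ : Noncrossing π) (ht : t ∈ Icc 1 n) :
    blockMin π t = opener (blockSize π) t := by
  by_cases hq : blockSize π t = 0
  · have htn := (mem_Icc.1 ht).2
    have hlt : blockMin π t < t :=
      (blockMin_le π ht).lt_of_ne fun h => (blockSize_ne_zero_iff ht).2 h hq
    refine (opener_eq_of_forall hq hlt ?_ fun k hk hkt => ?_).symm
    · rw [← card_pending (by omega), ← card_pending (by omega), Nat.cast_lt]
      exact card_lt_card (pending_blockMin_ssubset_pending hπ ht hlt)
    · rw [← card_pending (by omega), ← card_pending (by omega), Nat.cast_le]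
      exact card_le_card (pending_subset_pending_of_blockMin_lt hπ ht hk hkt)
  · rw [opener_of_ne_zero hq, (blockSize_ne_zero_iff ht).1 hq]

lemma exists_noncrossing_blockSize_eq (hpos : ∀ t ∈ Icc 1 n, q t = 0 → 0 < height q t)
    (hend : height q (n + 1) = 0) :
    ∃ π : SetPartitionOn n, Noncrossing π ∧ ∀ i ∈ Icc 1 n, blockSize π i = q i := by
  obtain ⟨π, hπ⟩ := exists_finpartition_blockMin_eq
    (fun t ht => opener_mem_Icc ht (hpos t ht)) (fun t _ => opener_le)
    (fun t ht => opener_opener (mem_Icc.1 ht).1 (hpos t ht))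
  refine ⟨π, noncrossing_iff_blockMin_le.2 fun x hx y hy hxy hyx => ?_, fun i hi => ?_⟩
  · rw [hπ y hy] at hyx
    rw [hπ x hx, hπ y hy]
    exact opener_le_opener (hpos y hy) hxy hyx
  · rw [← card_filter_opener_eq hpos hend hi, blockSize, filter_congr fun y hy => by rw [hπ y hy]]

end SetPartition

section Word

variable {w : List ℕ} {i j n : ℕ}

/-- The letters of `w` numbered from `1`, extended by `0` beyond the end of `w` (and at `0`). -/
def letter (w : List ℕ) (i : ℕ) : ℕ := (0 :: w).getD i 0

lemma letter_succ : letter w (i + 1) = w.getD i 0 := rfl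

lemma letter_of_length_lt (h : w.length < i) : letter w i = 0 :=
  List.getD_eq_default _ _ (by simpa)

lemma wt_concat (a : ℕ) : wt (w ++ [a]) = wt w + (a - 1) := by
  simp [wt]

lemma wt_take (hj : j ≤ w.length) : wt (w.take j) = height (letter w) (j + 1) := by
  induction j with
  | zero => rfl
  | succ j ih =>
    rw [height_succ (by omega), ← ih (by omega), List.take_add_one, letter_succ,
      List.getD_eq_getElem _ _ hj, List.getElem?_eq_getElem hj, Option.toList_some, wt_concat,
      add_sub_assoc]

lemma mem_Bset_iff_height : w ∈ Bset ↔ height (letter w) (w.length + 1) = 1 ∧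
    ∀ j, 1 ≤ j → j ≤ w.length → 0 < height (letter w) (j + 1) := by
  rw [← wt_take le_rfl, List.take_length]
  exact and_congr_right fun _ => forall_congr' fun j => imp_congr_right fun _ =>
    forall_congr' fun hj => by rw [wt_take hj]

lemma count_zero_add_sum_count_succ (h : ∀ a ∈ w, a ≤ n) :
    w.count 0 + ∑ i : Fin n, w.count (i.1 + 1) = w.length := by
  have := Multiset.sum_count_eq_card (s := range (n + 1)) (m := (w : Multiset ℕ))
    fun a ha => mem_range.2 (Nat.lt_succ_of_le (h a ha))
  simp only [Multiset.coe_count, Multiset.coe_card] at this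
  rw [← this, sum_range_succ', add_comm, sum_range fun i => w.count (i + 1)]

end Word

section Psi

variable {n : ℕ} {π : SetPartitionOn n} {w : List ℕ} {i c : ℕ}

lemma psi_eq_map_blockSize : psi n π = (List.range (n - 1)).map fun k => blockSize π (k + 1) :=
  List.map_congr_left fun k _ => sum_card_parts_isLeast (k + 1)

lemma length_psi : (psi n π).length = n - 1 := by
  rw [psi, List.length_map, List.length_range]

lemma le_of_mem_psi {a : ℕ} (ha : a ∈ psi n π) : a ≤ n := by
  rw [psi_eq_map_blockSize, List.mem_map] at ha
  obtain ⟨k, -, rfl⟩ := ha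
  exact (card_filter_le _ _).trans_eq (Nat.card_Icc 1 n)

lemma letter_psi_of_lt (hi : i < n) : letter (psi n π) i = blockSize π i := by
  cases i with
  | zero => exact (blockSize_eq_zero_of_notMem (by simp)).symm
  | succ k =>
    rw [letter_succ, List.getD_eq_getElem _ _ (by rw [length_psi]; omega)]
    simp [psi_eq_map_blockSize]

lemma letter_psi (hlast : blockSize π n = 0) : letter (psi n π) = blockSize π := by
  funext i
  rcases lt_trichotomy i n with hi | rfl | hi
  · exact letter_psi_of_lt hi
  · rw [hlast]
    rcases i.eq_zero_or_pos with rfl | hi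
    · rfl
    · exact letter_of_length_lt (by rw [length_psi]; omega)
  · rw [blockSize_eq_zero_of_notMem (by simp [hi])]
    exact letter_of_length_lt (by rw [length_psi]; omega)

lemma count_psi (hlast : blockSize π n = 0) (hc : c ≠ 0) :
    (psi n π).count c = #{i ∈ Icc 1 n | blockSize π i = c} := by
  have hcount : (psi n π).count c = #{k ∈ range (n - 1) | c = blockSize π (k + 1)} := by
    rw [psi_eq_map_blockSize, ← Multiset.coe_count, ← Multiset.map_coe, Multiset.count_map]
    rfl
  have hshift : ({i ∈ Icc 1 n | blockSize π i = c} : Finset ℕ) =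
      {k ∈ range (n - 1) | c = blockSize π (k + 1)}.map (addRightEmbedding 1) := by
    ext i
    simp only [mem_filter, mem_map, mem_range, mem_Icc, addRightEmbedding_apply]
    constructor
    · rintro ⟨⟨hi, hin⟩, hic⟩
      have hne : i ≠ n := by rintro rfl; exact hc (hic ▸ hlast)
      exact ⟨i - 1, ⟨by omega, by rw [Nat.sub_add_cancel hi, hic]⟩, Nat.sub_add_cancel hi⟩
    · rintro ⟨k, ⟨hk, hkc⟩, rfl⟩
      exact ⟨by omega, hkc.symm⟩
  rw [hcount, hshift, card_map]

lemma hasType_iff_count_psi (hlast : blockSize π n = 0) {r : Fin n → ℕ} :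
    HasType π r ↔ ∀ i : Fin n, (psi n π).count (i.1 + 1) = r i :=
  forall_congr' fun i => by
    rw [card_parts_card_eq i.1.succ_ne_zero, count_psi hlast i.1.succ_ne_zero]

lemma blockSize_last_of_connected (hn : 1 < n) (hπ : Connected π) : blockSize π n = 0 := by
  have hpos := connected_iff_height_pos.1 hπ (n - 1) (by omega) le_rfl
  have hend := height_blockSize_last (π := π)
  rw [Nat.sub_add_cancel hn.le] at hpos
  rw [height_succ hn.le] at hend
  omega

lemma psi_mem_Bset_of_connected (hn : 1 < n) (hπ : Connected π) : psi n π ∈ Bset := by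
  have hlast := blockSize_last_of_connected hn hπ
  have hend := height_blockSize_last (π := π)
  rw [height_succ hn.le, hlast] at hend
  rw [mem_Bset_iff_height, letter_psi hlast, length_psi, Nat.sub_add_cancel hn.le]
  exact ⟨by omega, connected_iff_height_pos.1 hπ⟩

lemma psi_injOn_noncrossing :
    Set.InjOn (psi n) {π : SetPartitionOn n | Noncrossing π ∧ blockSize π n = 0} := by
  rintro π ⟨hπ, hlast⟩ π' ⟨hπ', hlast'⟩ h
  refine finpartition_ext_blockMin fun x hx => ?_
  rw [blockMin_eq_opener hπ hx, blockMin_eq_opener hπ' hx, ← letter_psi hlast,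
    ← letter_psi hlast', h]

lemma exists_noncrossing_blockSize_eq_letter (hw : w ∈ Bset) (hlen : w.length + 1 = n) :
    ∃ π : SetPartitionOn n, Noncrossing π ∧ blockSize π = letter w := by
  obtain ⟨hone, hpos⟩ := mem_Bset_iff_height.1 hw
  have hn : letter w n = 0 := letter_of_length_lt (by omega)
  have hclosers : ∀ t ∈ Icc 1 n, letter w t = 0 → 0 < height (letter w) t := fun t ht h0 => by
    obtain ⟨ht1, htn⟩ := mem_Icc.1 ht
    obtain ⟨j, rfl⟩ := Nat.exists_eq_add_of_le' ht1
    rcases j.eq_zero_or_pos with rfl | hj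
    · have hne : w.length ≠ 0 := fun hnil => by simp [hnil, height_one] at hone
      have h2 := hpos 1 le_rfl (by omega)
      rw [height_succ le_rfl, height_one, h0] at h2
      omega
    · exact hpos j hj (by omega)
  have hend : height (letter w) (n + 1) = 0 := by
    rw [height_succ (by omega), hn, ← hlen, hone]
    norm_num
  obtain ⟨π, hπ, hsize⟩ := exists_noncrossing_blockSize_eq hclosers hend
  refine ⟨π, hπ, funext fun i => ?_⟩
  by_cases hi : i ∈ Icc 1 n
  · exact hsize i hi
  · rw [blockSize_eq_zero_of_notMem hi]
    rw [mem_Icc] at hi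
    rcases i.eq_zero_or_pos with rfl | hi0
    · rfl
    · exact (letter_of_length_lt (by omega)).symm

lemma psi_eq_of_blockSize_eq_letter (hlen : w.length = n - 1) (h : blockSize π = letter w) :
    psi n π = w := by
  refine List.ext_getElem (by rw [length_psi, hlen]) fun k hk hkw => ?_
  simp only [psi_eq_map_blockSize, h, letter_succ, List.getElem_map, List.getElem_range,
    List.getD_eq_getElem _ _ hkw]

lemma count_psi_zero {r : Fin n → ℕ} (h : ∀ i : Fin n, (psi n π).count (i.1 + 1) = r i) :
    (psi n π).count 0 = n - (∑ i, r i) - 1 := by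
  have hsum : ∑ i : Fin n, (psi n π).count (i.1 + 1) = ∑ i, r i := sum_congr rfl fun i _ => h i
  have hlen := count_zero_add_sum_count_succ fun _ => le_of_mem_psi (π := π)
  rw [hsum, length_psi] at hlen
  omega

theorem psi_bijOn_connected_noncrossing (hn : 1 < n) :
    Set.BijOn (psi n) {π : SetPartitionOn n | Noncrossing π ∧ Connected π}
      {w : List ℕ | w.length = n - 1 ∧ w ∈ Bset} := by
  refine ⟨fun π hπ => ⟨length_psi, psi_mem_Bset_of_connected hn hπ.2⟩,
    psi_injOn_noncrossing.mono ?_, ?_⟩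
  · exact fun π hπ => ⟨hπ.1, blockSize_last_of_connected hn hπ.2⟩
  rintro w ⟨hlen, hw⟩
  have hlen' : w.length + 1 = n := by omega
  obtain ⟨π, hπ, hsize⟩ := exists_noncrossing_blockSize_eq_letter hw hlen'
  refine ⟨π, ⟨hπ, connected_iff_height_pos.2 ?_⟩, psi_eq_of_blockSize_eq_letter hlen hsize⟩
  rw [hsize, ← hlen]
  exact (mem_Bset_iff_height.1 hw).2

end Psi

/-- `ψ` is a bijection from the connected noncrossing partitions of `[n]` of type `r` onto
`ℬ(r)`, the words of length `n - 1` in `ℬ` with `n - |r| - 1` letters `0` and `r i`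
letters `i` for `1 ≤ i ≤ n`. -/
theorem psi_bijOn_noncrossing (n : ℕ) (hn : 1 < n) (r : Fin n → ℕ)
    (hrv : ∑ i, (i.1 + 1) * r i = n) (hr : ∑ i, r i < n) :
    Set.BijOn (psi n)
      {π : SetPartitionOn n | Noncrossing π ∧ HasType π r ∧ Connected π}
      {w : List ℕ | w.length = n - 1 ∧ w ∈ Bset ∧
        w.count 0 = n - (∑ i, r i) - 1 ∧ ∀ i : Fin n, w.count (i.1 + 1) = r i} := by
  have hbij := (psi_bijOn_connected_noncrossing hn).subset_right
    (r := {w | w.length = n - 1 ∧ w ∈ Bset ∧ w.count 0 = n - (∑ i, r i) - 1 ∧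
      ∀ i : Fin n, w.count (i.1 + 1) = r i}) fun w hw => ⟨hw.1, hw.2.1⟩
  convert hbij using 1
  ext π
  constructor
  · rintro ⟨hπ, htype, hconn⟩
    have hcount := (hasType_iff_count_psi (blockSize_last_of_connected hn hconn)).1 htype
    exact ⟨⟨hπ, hconn⟩, length_psi, psi_mem_Bset_of_connected hn hconn, count_psi_zero hcount,
      hcount⟩
  · rintro ⟨⟨hπ, hconn⟩, -, -, -, hcount⟩
    exact ⟨hπ, (hasType_iff_count_psi (blockSize_last_of_connected hn hconn)).2 hcount, hconn⟩
end
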